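/- arXiv:2304.05859 — 2 statements merged into one kernel-verified Lean document; each statement's English description precedes it below -/
import Mathlib

section
/- Let G be a planar graph. Let s be the number of edges whose both endpoints have degree at most 2, and h the number of vertices of degree at least 3. Then s + h ≤ 3ν(G). -/
/-- A graph is planar if it has a topological embedding in the plane: vertices
are distinct points, edges are injective continuous arcs joining their
endpoints whose interiors avoid vertices, and distinct edges meet only at
common endpoints. -/
def SimpleGraph.IsPlanar {V : Type*} (G : SimpleGraph V) : Prop :=
  ∃ (pos : V → ℝ × ℝ) (γ : ∀ ⦃u v : V⦄, G.Adj u v → unitInterval → ℝ × ℝ),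
    Function.Injective pos ∧
    (∀ ⦃u v : V⦄ (h : G.Adj u v),
      Continuous (γ h) ∧ Function.Injective (γ h) ∧
      γ h 0 = pos u ∧ γ h 1 = pos v) ∧
    (∀ ⦃u v : V⦄ (h : G.Adj u v) (t : unitInterval),
      γ h.symm (unitInterval.symm t) = γ h t) ∧
    (∀ ⦃u v : V⦄ (h : G.Adj u v) (t : unitInterval),
      t ≠ 0 → t ≠ 1 → ∀ w : V, γ h t ≠ pos w) ∧
    (∀ ⦃u v u' v' : V⦄ (h : G.Adj u v) (h' : G.Adj u' v') (t t' : unitInterval),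
      s(u, v) ≠ s(u', v') → γ h t = γ h' t' → t = 0 ∨ t = 1)

/-!
Choose a largest set `U` of vertices whose deletion lowers the matching number by at least `#U`.
By maximality every vertex of `G - U` is missed by some maximum matching, so by Gallai's lemma each
component with an edge has odd order at least three and `G - U` has at most `3ν(G - U)` non-isolated
vertices. These pay for the shallow edges inside `G - U`, which form a graph of maximum degree two,
and for the high vertices among them. The remaining shallow edges meet `U`, and the remaining high
vertices are in `U` or have all their neighbours there. They number at most `3 * #U`, because
planar bipartite graphs on `n` vertices have at most `2n` edges.

For this last bound the drawing is replaced by a minor model in a fine square grid. Thin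
neighbourhoods of the two stars of half edges around adjacent vertices overlap, so the stars of one
colour class are kept and those of the other are trimmed. In the grid the facial cycles span the
cycle space by an elementary discrete Poincaré lemma, and this passes to minors. Each edge is on at
most two faces and each face has at least four edges, which gives `4 (e - n) ≤ 2 e`.
-/

open Finset SimpleGraph

namespace PlanarMatching

section Chains

variable {P : Type*} (Γ : SimpleGraph P) [Γ.LocallyFinite]

/-- The boundary map from mod 2 edge chains to mod 2 vertex chains. Edge chains are functions on all
unordered pairs, of which only the values at the edges of `Γ` matter. -/
def boundary : (Sym2 P → ZMod 2) →ₗ[ZMod 2] (P → ZMod 2) where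
  toFun w p := ∑ q ∈ Γ.neighborFinset p, w s(p, q)
  map_add' _ _ := funext fun _ => sum_add_distrib
  map_smul' _ _ := funext fun _ => (mul_sum ..).symm

lemma boundary_apply (w : Sym2 P → ZMod 2) (p : P) :
    boundary Γ w p = ∑ q ∈ Γ.neighborFinset p, w s(p, q) := rfl

variable {Γ}

lemma boundary_congr {w w' : Sym2 P → ZMod 2} (h : ∀ x ∈ Γ.edgeSet, w x = w' x) :
    boundary Γ w = boundary Γ w' :=
  funext fun _ => sum_congr rfl fun _ hq => h _ ((Γ.mem_neighborFinset ..).1 hq)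

lemma boundary_single [DecidableEq P] {p q : P} (h : Γ.Adj p q) :
    boundary Γ (Pi.single s(p, q) 1) = Pi.single p 1 + Pi.single q 1 := by
  ext r
  simp only [boundary_apply, Pi.single_apply, Pi.add_apply]
  rcases eq_or_ne r p with rfl | hrp
  · simp [h.ne, h]
  rcases eq_or_ne r q with rfl | hrq
  · simp [h.ne', h.symm]
  simp [hrp, hrq]

/-- Every edge inside `S` contributes twice. -/
lemma sum_boundary_eq_zero {S : Finset P} {w : Sym2 P → ZMod 2}
    (hw : ∀ p ∈ S, ∀ q, Γ.Adj p q → w s(p, q) ≠ 0 → q ∈ S) :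
    ∑ p ∈ S, boundary Γ w p = 0 := by
  classical
  have hinner : ∑ p ∈ S, boundary Γ w p = ∑ x ∈ S ×ˢ S with Γ.Adj x.1 x.2, w s(x.1, x.2) := by
    rw [sum_filter, sum_product]
    refine sum_congr rfl fun p hp => ?_
    rw [boundary_apply, ← sum_filter]
    refine (sum_subset_zero_on_sdiff ?_ ?_ fun _ _ => rfl).symm
    · intro q hq
      simpa using (mem_filter.1 hq).2
    · intro q hq
      by_contra hne
      simp only [mem_sdiff, mem_neighborFinset, mem_filter, not_and] at hq
      exact hq.2 (hw p hp q hq.1 hne) hq.1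
  rw [hinner]
  refine sum_involution (fun x _ => x.swap) ?_ ?_ ?_ fun _ _ => Prod.swap_swap _
  · intro x _
    rw [Prod.fst_swap, Prod.snd_swap, Sym2.eq_swap]
    exact ZModModule.add_self _
  · intro x hx _ heq
    exact (mem_filter.1 hx).2.ne (congrArg Prod.snd heq)
  · intro x hx
    simp only [mem_filter, mem_product, Prod.fst_swap, Prod.snd_swap] at hx ⊢
    exact ⟨hx.1.symm, hx.2.symm⟩

lemma exists_boundary_of_walk [DecidableEq P] {p q : P} (W : Γ.Walk p q) :
    ∃ w : Sym2 P → ZMod 2, (∀ x, w x ≠ 0 → x ∈ W.edges) ∧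
      boundary Γ w = Pi.single p 1 + Pi.single q 1 := by
  induction W with
  | nil => exact ⟨0, by simp, by rw [map_zero, ZModModule.add_self]⟩
  | @cons p r q h W ih =>
    obtain ⟨w, hw, hbd⟩ := ih
    refine ⟨Pi.single s(p, r) 1 + w, fun x hx => ?_, ?_⟩
    · rw [Walk.edges_cons, List.mem_cons, or_iff_not_imp_left]
      intro hne
      exact hw x (by simpa [hne] using hx)
    · rw [map_add, hbd, boundary_single h, add_assoc, ← add_assoc (Pi.single r 1),
        ZModModule.add_self, zero_add]

lemma exists_boundary_of_reachable [DecidableEq P] {S : Set P} {p q : S}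
    (h : (Γ.induce S).Reachable p q) :
    ∃ w : Sym2 P → ZMod 2, (∀ x, w x ≠ 0 → ∀ r ∈ x, r ∈ S) ∧
      boundary Γ w = Pi.single p.1 1 + Pi.single q.1 1 := by
  obtain ⟨W⟩ := h
  obtain ⟨w, hw, hbd⟩ := exists_boundary_of_walk (W.map (Embedding.induce S).toHom)
  refine ⟨w, fun x hx r hr => ?_, hbd⟩
  have hr := Walk.mem_support_of_mem_edges (hw x hx) hr
  rw [Walk.support_map, List.mem_map] at hr
  obtain ⟨r, -, rfl⟩ := hr
  exact r.2

/-- All the mass of `f` is moved to one vertex of `S`, where it cancels. -/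
lemma exists_boundary_of_preconnected {S : Finset P}
    (hS : (Γ.induce (S : Set P)).Preconnected) {f : P → ZMod 2} (hf : ∑ p ∈ S, f p = 0) :
    ∃ w : Sym2 P → ZMod 2, (∀ x, w x ≠ 0 → ∀ p ∈ x, p ∈ S) ∧
      ∀ p, (p ∈ S → boundary Γ w p = f p) ∧ (p ∉ S → boundary Γ w p = 0) := by
  classical
  rcases S.eq_empty_or_nonempty with rfl | ⟨p₀, hp₀⟩
  · exact ⟨0, by simp, by simp⟩
  choose w hw hbd using fun p : S => exists_boundary_of_reachable (hS p ⟨p₀, hp₀⟩)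
  have hsum : boundary Γ (∑ p : S, f p • w p) = ∑ p ∈ S, Pi.single p (f p) := by
    simp only [map_sum, map_smul, hbd, smul_add, sum_add_distrib, ← sum_smul]
    rw [sum_coe_sort S f, hf, zero_smul, add_zero, ← sum_coe_sort S]
    simp [← Pi.single_smul]
  refine ⟨∑ p : S, f p • w p, fun x hx => ?_, fun p => ?_⟩
  · rw [Finset.sum_apply] at hx
    obtain ⟨p, -, hp⟩ := exists_ne_zero_of_sum_ne_zero hx
    exact hw p x fun h => hp (by rw [Pi.smul_apply, h, smul_zero])
  · rw [hsum, Finset.sum_apply]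
    simp only [Pi.single_apply, sum_ite_eq]
    exact ⟨fun h => if_pos h, fun h => if_neg h⟩

end Chains

section MinorModel

variable {V P : Type*}

/-- A model of `G` as a minor of `Γ`: the vertices of `G` are represented by disjoint connected
finite vertex sets of `Γ`, and every edge of `G` by an edge of `Γ` that links the corresponding
sets. The values of `link` outside the edges of `G` are irrelevant. -/
structure MinorModel (G : SimpleGraph V) (Γ : SimpleGraph P) where
  branch : V → Finset P
  link : Sym2 V → Sym2 P
  disjoint_branch : Pairwise fun u v => Disjoint (branch u) (branch v)
  preconnected_branch : ∀ v, (Γ.induce (branch v : Set P)).Preconnected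
  exists_link_eq : ∀ ⦃u v⦄, G.Adj u v →
    ∃ p ∈ branch u, ∃ q ∈ branch v, Γ.Adj p q ∧ link s(u, v) = s(p, q)

namespace MinorModel

variable {G : SimpleGraph V} {Γ : SimpleGraph P} (M : MinorModel G Γ)

lemma eq_of_mem_branch {u v : V} {p : P} (hu : p ∈ M.branch u) (hv : p ∈ M.branch v) : u = v := by
  by_contra h
  exact disjoint_left.1 (M.disjoint_branch h) hu hv

lemma link_mem_edgeSet {e : Sym2 V} (he : e ∈ G.edgeSet) : M.link e ∈ Γ.edgeSet := by
  induction e using Sym2.ind with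
  | _ u v =>
    obtain ⟨p, -, q, -, hpq, hlink⟩ := M.exists_link_eq he
    rw [hlink]
    exact hpq

lemma injOn_link : Set.InjOn M.link G.edgeSet := by
  intro e he e' he' heq
  induction e using Sym2.ind with
  | _ u v =>
  induction e' using Sym2.ind with
  | _ u' v' =>
    rw [mem_edgeSet] at he he'
    obtain ⟨p, hp, q, hq, -, hlink⟩ := M.exists_link_eq he
    obtain ⟨p', hp', q', hq', -, hlink'⟩ := M.exists_link_eq he'
    rw [hlink, hlink'] at heq
    rcases Sym2.eq_iff.1 heq with ⟨rfl, rfl⟩ | ⟨rfl, rfl⟩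
    · rw [M.eq_of_mem_branch hp hp', M.eq_of_mem_branch hq hq']
    · rw [M.eq_of_mem_branch hp hq', M.eq_of_mem_branch hq hp', Sym2.eq_swap]

lemma not_link_subset_branch {e : Sym2 V} (he : e ∈ G.edgeSet) (v : V) :
    ¬ ∀ p ∈ M.link e, p ∈ M.branch v := by
  induction e using Sym2.ind with
  | _ u u' =>
    obtain ⟨p, hp, q, hq, -, hlink⟩ := M.exists_link_eq he
    intro h
    rw [hlink] at h
    exact he.ne ((M.eq_of_mem_branch hp (h p (Sym2.mem_mk_left p q))).trans
      (M.eq_of_mem_branch hq (h q (Sym2.mem_mk_right p q))).symm)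

/-- The pairs of vertices of `Γ` that the minor uses: the links and the pairs inside a branch
set. -/
def IsKept (x : Sym2 P) : Prop :=
  (∃ e ∈ G.edgeSet, M.link e = x) ∨ ∃ v, ∀ p ∈ x, p ∈ M.branch v

lemma sum_boundary_single_link [DecidableEq V] [DecidableEq P] [G.LocallyFinite]
    [Γ.LocallyFinite] {e : Sym2 V} (he : e ∈ G.edgeSet) (v : V) :
    ∑ p ∈ M.branch v, boundary Γ (Pi.single (M.link e) 1) p = boundary G (Pi.single e 1) v := by
  induction e using Sym2.ind with
  | _ a b =>
    obtain ⟨p, hp, q, hq, hpq, hlink⟩ := M.exists_link_eq he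
    have hpv : p ∈ M.branch v ↔ v = a := ⟨fun h => M.eq_of_mem_branch h hp, fun h => h ▸ hp⟩
    have hqv : q ∈ M.branch v ↔ v = b := ⟨fun h => M.eq_of_mem_branch h hq, fun h => h ▸ hq⟩
    rw [hlink, boundary_single hpq, boundary_single he]
    simp [sum_add_distrib, Pi.single_apply, hpv, hqv]

section Push

variable [Fintype G.edgeSet] [DecidableEq P]

/-- The edge chain of `Γ` in which every edge of `G` is replaced by its link. -/
def push (g : Sym2 V → ZMod 2) : Sym2 P → ZMod 2 :=
  ∑ e ∈ G.edgeFinset, g e • Pi.single (M.link e) 1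

lemma push_link (g : Sym2 V → ZMod 2) {e : Sym2 V} (he : e ∈ G.edgeSet) :
    M.push g (M.link e) = g e := by
  rw [push, Finset.sum_apply, sum_eq_single_of_mem e (mem_edgeFinset.2 he)]
  · simp
  · intro e' he' hne
    have := M.injOn_link.ne he (mem_edgeFinset.1 he') hne.symm
    simp [this]

lemma exists_link_eq_of_push_ne_zero {g : Sym2 V → ZMod 2} {x : Sym2 P} (hx : M.push g x ≠ 0) :
    ∃ e ∈ G.edgeSet, M.link e = x := by
  rw [push, Finset.sum_apply] at hx
  obtain ⟨e, he, hne⟩ := exists_ne_zero_of_sum_ne_zero hx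
  refine ⟨e, mem_edgeFinset.1 he, ?_⟩
  by_contra h
  exact hne (by simp [Ne.symm h])

variable [Γ.LocallyFinite]

lemma sum_boundary_push [G.LocallyFinite] (g : Sym2 V → ZMod 2) (v : V) :
    ∑ p ∈ M.branch v, boundary Γ (M.push g) p = boundary G g v := by
  classical
  have hg : boundary G g = boundary G (∑ e ∈ G.edgeFinset, g e • Pi.single e 1) :=
    boundary_congr fun e he => by simp [Finset.sum_apply, Pi.single_apply, he]
  rw [hg, push]
  simp only [map_sum, map_smul, Finset.sum_apply, Pi.smul_apply]
  rw [sum_comm]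
  refine sum_congr rfl fun e he => ?_
  rw [← smul_sum, M.sum_boundary_single_link (mem_edgeFinset.1 he)]

lemma exists_mem_branch_of_boundary_push_ne_zero {g : Sym2 V → ZMod 2} {p : P}
    (hp : boundary Γ (M.push g) p ≠ 0) : ∃ v, p ∈ M.branch v := by
  rw [boundary_apply] at hp
  obtain ⟨q, -, hq⟩ := exists_ne_zero_of_sum_ne_zero hp
  obtain ⟨e, he, hlink⟩ := M.exists_link_eq_of_push_ne_zero hq
  induction e using Sym2.ind with
  | _ u v =>
    obtain ⟨p', hp', q', hq', -, hlink'⟩ := M.exists_link_eq he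
    rcases Sym2.eq_iff.1 (hlink.symm.trans hlink') with ⟨rfl, -⟩ | ⟨rfl, -⟩
    · exact ⟨u, hp'⟩
    · exact ⟨v, hq'⟩

end Push

variable [Γ.LocallyFinite] [G.LocallyFinite]

lemma boundary_comp_link_eq_zero [Finite G.edgeSet] {w : Sym2 P → ZMod 2}
    (hw : ∀ x ∈ Γ.edgeSet, w x ≠ 0 → M.IsKept x) (hbd : boundary Γ w = 0) :
    boundary G (w ∘ M.link) = 0 := by
  classical
  have := Fintype.ofFinite G.edgeSet
  ext v
  have hinner : ∑ p ∈ M.branch v, boundary Γ (w - M.push (w ∘ M.link)) p = 0 := by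
    refine sum_boundary_eq_zero fun p hp q hpq hne => ?_
    rw [Pi.sub_apply] at hne
    have hpush : ¬ ∃ e ∈ G.edgeSet, M.link e = s(p, q) := by
      rintro ⟨e, he, hlink⟩
      exact hne (by rw [← hlink, M.push_link _ he, Function.comp_apply, sub_self])
    have hzero : M.push (w ∘ M.link) s(p, q) = 0 := by
      by_contra h
      exact hpush (M.exists_link_eq_of_push_ne_zero h)
    rw [hzero, sub_zero] at hne
    obtain ⟨u, hu⟩ := (hw _ hpq hne).resolve_left hpush
    rw [M.eq_of_mem_branch hp (hu p (Sym2.mem_mk_left p q))]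
    exact hu q (Sym2.mem_mk_right p q)
  rw [map_sub, hbd, zero_sub] at hinner
  simpa [sum_boundary_push] using hinner

/-- The replaced edges of a cycle of `G` have even boundary in each branch set, so they can be
joined to a cycle of `Γ` inside the branch sets. -/
lemma exists_cycle_of_boundary_eq_zero [Finite V] {g : Sym2 V → ZMod 2} (hg : boundary G g = 0) :
    ∃ w : Sym2 P → ZMod 2, boundary Γ w = 0 ∧ (∀ x, w x ≠ 0 → M.IsKept x) ∧
      ∀ e ∈ G.edgeSet, w (M.link e) = g e := by
  classical
  have := Fintype.ofFinite V
  have := Fintype.ofFinite G.edgeSet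
  choose c hc hbd using fun v => exists_boundary_of_preconnected (M.preconnected_branch v)
    (f := boundary Γ (M.push g)) (by rw [sum_boundary_push, hg, Pi.zero_apply])
  refine ⟨M.push g + ∑ v, c v, ?_, fun x hx => ?_, fun e he => ?_⟩
  · ext p
    rw [map_add, map_sum, Pi.add_apply, Finset.sum_apply, Pi.zero_apply]
    by_cases hp : ∃ v, p ∈ M.branch v
    · obtain ⟨v, hv⟩ := hp
      rw [sum_eq_single v, (hbd v p).1 hv, ZModModule.add_self]
      · exact fun u _ hu => (hbd u p).2 fun h => hu (M.eq_of_mem_branch h hv)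
      · simp
    · rw [not_ne_iff.1 (mt M.exists_mem_branch_of_boundary_push_ne_zero hp), zero_add]
      exact sum_eq_zero fun v _ => (hbd v p).2 fun h => hp ⟨v, h⟩
  · by_cases hpush : M.push g x = 0
    · rw [Pi.add_apply, hpush, zero_add, Finset.sum_apply] at hx
      obtain ⟨v, -, hv⟩ := exists_ne_zero_of_sum_ne_zero hx
      exact .inr ⟨v, hc v x hv⟩
    · exact .inl (M.exists_link_eq_of_push_ne_zero hpush)
  · rw [Pi.add_apply, M.push_link g he, Finset.sum_apply, sum_eq_zero, add_zero]
    exact fun v _ => not_ne_iff.1 (mt (hc v _) (M.not_link_subset_branch he v))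

end MinorModel

end MinorModel

section Integration

variable {A : Type*} [AddCommGroup A]

lemma exists_add_one_eq_add (f : ℤ → A) (a₀ : A) :
    ∃ F : ℤ → A, F 0 = a₀ ∧ ∀ i, F (i + 1) = F i + f i := by
  refine ⟨fun i => a₀ + ∑ k ∈ Ico 0 i, f k - ∑ k ∈ Ico i 0, f k, by simp, fun i => ?_⟩
  rcases le_or_gt 0 i with hi | hi
  · beta_reduce
    rw [← insert_Ico_right_eq_Ico_add_one hi, sum_insert right_notMem_Ico,
      Ico_eq_empty_of_le hi, Ico_eq_empty_of_le (by lia : 0 ≤ i + 1)]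
    abel
  · beta_reduce
    rw [← insert_Ico_add_one_left_eq_Ico hi, sum_insert (by simp),
      Ico_eq_empty_of_le hi.le, Ico_eq_empty_of_le (by lia : i + 1 ≤ 0)]
    abel

/-- The discrete Poincaré lemma in the plane. -/
lemma exists_potential {a b : ℤ → ℤ → A}
    (hab : ∀ i j, a i j + b i (j + 1) = b i j + a (i + 1) j) :
    ∃ φ : ℤ → ℤ → A, ∀ i j, φ (i + 1) j = φ i j + b i j ∧ φ i (j + 1) = φ i j + a i j := by
  obtain ⟨φ₀, -, hφ₀⟩ := exists_add_one_eq_add (a 0) 0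
  obtain ⟨φ, hφ_zero, hφ⟩ := exists_add_one_eq_add b φ₀
  refine ⟨φ, fun i j => ⟨by rw [hφ, Pi.add_apply], ?_⟩⟩
  have hperiodic : Function.Periodic (fun i => φ i (j + 1) - φ i j - a i j) 1 := by
    intro i
    simp only [hφ, Pi.add_apply]
    rw [eq_sub_of_add_eq' (hab i j)]
    abel
  have hconst := hperiodic.int_mul_eq i
  rw [mul_one, Int.cast_id, hφ_zero, hφ₀, add_sub_cancel_left, sub_self, sub_sub, sub_eq_zero]
    at hconst
  exact hconst

end Integration

section Grid

/-- The square grid graph on `ℤ × ℤ`. -/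
noncomputable def grid : SimpleGraph (ℤ × ℤ) := hasse ℤ □ hasse ℤ

/-- The four neighbours of a vertex of the square grid. -/
def gridNeighbors (p : ℤ × ℤ) : Finset (ℤ × ℤ) :=
  {(p.1 + 1, p.2), (p.1 - 1, p.2), (p.1, p.2 + 1), (p.1, p.2 - 1)}

lemma grid_adj_iff {p q : ℤ × ℤ} : grid.Adj p q ↔ q ∈ gridNeighbors p := by
  simp only [grid, gridNeighbors, boxProd_adj, hasse_adj, Order.covBy_iff_add_one_eq, mem_insert,
    mem_singleton, Prod.ext_iff]
  omega

lemma reachable_induce_grid {S : Set (ℤ × ℤ)} {p q : S}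
    (h : |p.1.1 - q.1.1| + |p.1.2 - q.1.2| ≤ 1) : (grid.induce S).Reachable p q := by
  obtain ⟨⟨i, j⟩, hp⟩ := p
  obtain ⟨⟨k, l⟩, hq⟩ := q
  have hadj : (i, j) = (k, l) ∨ grid.Adj (i, j) (k, l) := by
    simp only [grid_adj_iff, gridNeighbors, mem_insert, mem_singleton, Prod.mk.injEq]
    simp only [abs_eq_max_neg] at h
    omega
  rcases hadj with heq | hadj
  · cases heq
    rfl
  · exact Adj.reachable hadj

noncomputable instance : grid.LocallyFinite := fun p =>
  Fintype.ofFinset (gridNeighbors p) fun _ => grid_adj_iff.symm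

lemma boundary_grid_apply (w : Sym2 (ℤ × ℤ) → ZMod 2) (i j : ℤ) :
    boundary grid w (i, j) = w s((i, j), (i + 1, j)) + w s((i - 1, j), (i, j)) +
      w s((i, j), (i, j + 1)) + w s((i, j - 1), (i, j)) := by
  have hneighbors : grid.neighborFinset (i, j) = gridNeighbors (i, j) := by
    ext q
    rw [mem_neighborFinset, grid_adj_iff]
  rw [boundary_apply, hneighbors, gridNeighbors]
  rw [sum_insert, sum_insert, sum_insert, sum_singleton, @Sym2.eq_swap _ (i - 1, j),
    @Sym2.eq_swap _ (i, j - 1)]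
  · ring
  all_goals simp [Prod.ext_iff] <;> try omega

lemma forall_mem_edgeSet_grid {Q : Sym2 (ℤ × ℤ) → Prop} :
    (∀ x ∈ grid.edgeSet, Q x) ↔
      ∀ i j, Q s((i, j), (i + 1, j)) ∧ Q s((i, j), (i, j + 1)) := by
  refine ⟨fun h i j => ⟨h _ ?_, h _ ?_⟩, fun h x hx => ?_⟩
  · simp [grid_adj_iff, gridNeighbors]
  · simp [grid_adj_iff, gridNeighbors]
  induction x using Sym2.ind with
  | _ p q =>
    obtain ⟨i, j⟩ := p
    rw [mem_edgeSet, grid_adj_iff, gridNeighbors] at hx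
    simp only [mem_insert, mem_singleton] at hx
    rcases hx with rfl | rfl | rfl | rfl
    · exact (h i j).1
    · simpa [Sym2.eq_swap] using (h (i - 1) j).1
    · exact (h i j).2
    · simpa [Sym2.eq_swap] using (h i (j - 1)).2

/-- The edge chain separating the faces of the grid on which a face function takes different
values. The face `p` is the unit square with upper right corner `p`, so that the two faces at
a grid edge `x` are `x.sup` and `x.inf + 1`. -/
def coboundary (φ : ℤ × ℤ → ZMod 2) (x : Sym2 (ℤ × ℤ)) : ZMod 2 := φ x.sup + φ (x.inf + 1)

lemma coboundary_horizontal (φ : ℤ × ℤ → ZMod 2) (i j : ℤ) :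
    coboundary φ s((i, j), (i + 1, j)) = φ (i + 1, j) + φ (i + 1, j + 1) := by
  simp [coboundary, Prod.add_def]

lemma coboundary_vertical (φ : ℤ × ℤ → ZMod 2) (i j : ℤ) :
    coboundary φ s((i, j), (i, j + 1)) = φ (i, j + 1) + φ (i + 1, j + 1) := by
  simp [coboundary, Prod.add_def]

lemma boundary_coboundary (φ : ℤ × ℤ → ZMod 2) : boundary grid (coboundary φ) = 0 := by
  ext ⟨i, j⟩
  have hleft := coboundary_horizontal φ (i - 1) j
  have hbelow := coboundary_vertical φ i (j - 1)
  rw [sub_add_cancel] at hleft hbelow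
  rw [boundary_grid_apply, coboundary_horizontal, coboundary_vertical, hleft, hbelow,
    Pi.zero_apply]
  linear_combination ZModModule.add_self (φ (i + 1, j)) + ZModModule.add_self (φ (i, j)) +
    ZModModule.add_self (φ (i, j + 1)) + ZModModule.add_self (φ (i + 1, j + 1))

lemma exists_eq_coboundary {w : Sym2 (ℤ × ℤ) → ZMod 2} (hw : boundary grid w = 0) :
    ∃ φ, ∀ x ∈ grid.edgeSet, w x = coboundary φ x := by
  obtain ⟨φ, hφ⟩ := exists_potential (a := fun i j => w s((i - 1, j), (i, j)))
    (b := fun i j => w s((i, j - 1), (i, j))) fun i j => by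
      have hbd := congrFun hw (i, j)
      rw [boundary_grid_apply, Pi.zero_apply] at hbd
      simp only [add_sub_cancel_right]
      rw [← sub_eq_zero, CharTwo.sub_eq_add]
      linear_combination hbd
  refine ⟨fun p => φ p.1 p.2, forall_mem_edgeSet_grid.2 fun i j => ?_⟩
  rw [coboundary_horizontal, coboundary_vertical]
  constructor
  · have h := (hφ (i + 1) j).2
    rw [add_sub_cancel_right] at h
    rw [h, ← add_assoc, ZModModule.add_self, zero_add]
  · have h := (hφ i (j + 1)).1
    rw [add_sub_cancel_right] at h
    rw [h, ← add_assoc, ZModModule.add_self, zero_add]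

end Grid

section CycleSpace

lemma mul_finrank_span_le {E K : Type*} [Fintype E] [Field K] [DecidableEq K] {T : Set (E → K)}
    {k m : ℕ} (hk : ∀ v ∈ T, v ≠ 0 → k ≤ hammingNorm v)
    (hm : ∀ e, {v ∈ T | v e ≠ 0}.encard ≤ m) :
    k * Module.finrank K (Submodule.span K T) ≤ m * Fintype.card E := by
  classical
  obtain ⟨b, hbT, hspan, hb⟩ := exists_linearIndependent K T
  have := hb.setFinite.fintype
  rw [← hspan, finrank_span_set_eq_card hb]
  have hcol : ∀ e, #{v ∈ b.toFinset | v e ≠ 0} ≤ m := fun e => by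
    rw [← Nat.cast_le (α := ℕ∞), ← Set.encard_coe_eq_coe_finsetCard]
    refine (Set.encard_le_encard fun v hv => ?_).trans (hm e)
    simp only [coe_filter, Set.mem_toFinset] at hv
    exact ⟨hbT hv.1, hv.2⟩
  calc k * #b.toFinset ≤ ∑ v ∈ b.toFinset, hammingNorm v := by
        rw [mul_comm, ← smul_eq_mul]
        refine card_nsmul_le_sum _ _ _ fun v hv => ?_
        rw [Set.mem_toFinset] at hv
        exact hk v (hbT hv) (hb.ne_zero ⟨v, hv⟩)
    _ = ∑ e, #{v ∈ b.toFinset | v e ≠ 0} :=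
        sum_card_bipartiteAbove_eq_sum_card_bipartiteBelow fun (v : E → K) e => v e ≠ 0
    _ ≤ m * Fintype.card E := by
        rw [mul_comm]
        exact sum_le_card_nsmul _ _ _ fun e _ => hcol e

variable {V : Type*} (G : SimpleGraph V) [G.LocallyFinite]

/-- The mod 2 cycle space: the sets of edges that meet every vertex in an even number of edges. -/
noncomputable def cycleSpace : Submodule (ZMod 2) (G.edgeSet → ZMod 2) :=
  (boundary G ∘ₗ Function.ExtendByZero.linearMap (ZMod 2) Subtype.val).ker

variable {G}

lemma mem_cycleSpace_iff {f : G.edgeSet → ZMod 2} :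
    f ∈ cycleSpace G ↔ boundary G (Function.extend Subtype.val f 0) = 0 := .rfl

lemma domRestrict_mem_cycleSpace {g : Sym2 V → ZMod 2} (hg : boundary G g = 0) :
    G.edgeSet.domRestrict g ∈ cycleSpace G := by
  rw [mem_cycleSpace_iff, ← hg]
  exact boundary_congr fun e he => Subtype.val_injective.extend_apply _ _ ⟨e, he⟩

lemma card_edgeSet_le_finrank_cycleSpace_add_card [Fintype V] [Fintype G.edgeSet] :
    Fintype.card G.edgeSet ≤ Module.finrank (ZMod 2) (cycleSpace G) + Fintype.card V := by
  let d : (G.edgeSet → ZMod 2) →ₗ[ZMod 2] (V → ZMod 2) :=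
    boundary G ∘ₗ Function.ExtendByZero.linearMap (ZMod 2) Subtype.val
  calc Fintype.card G.edgeSet
      = Module.finrank (ZMod 2) d.range + Module.finrank (ZMod 2) (cycleSpace G) := by
        rw [← Module.finrank_fintype_fun_eq_card (ZMod 2)]
        exact d.finrank_range_add_finrank_ker.symm
    _ ≤ Module.finrank (ZMod 2) (cycleSpace G) + Fintype.card V := by
        rw [add_comm, ← Module.finrank_fintype_fun_eq_card (ZMod 2) (η := V)]
        exact Nat.add_le_add_left d.range.finrank_le _

lemma exists_adj_of_boundary_eq_zero {g : Sym2 V → ZMod 2} (hg : boundary G g = 0) {u v : V}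
    (huv : G.Adj u v) (hne : g s(u, v) ≠ 0) : ∃ w ≠ u, G.Adj v w ∧ g s(v, w) ≠ 0 := by
  classical
  by_contra! h
  have hsum := congrFun hg v
  rw [boundary_apply, sum_eq_single_of_mem u ((G.mem_neighborFinset ..).2 huv.symm)] at hsum
  · exact hne (Sym2.eq_swap ▸ hsum)
  · exact fun w hw hwu => h w hwu ((G.mem_neighborFinset ..).1 hw)

/-- Extending an edge of the cycle on both sides gives a path with three edges, and one more edge at
its end. -/
lemma exists_card_eq_four_of_boundary_eq_zero (hG : G.CliqueFree 3) {g : Sym2 V → ZMod 2}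
    (hg : boundary G g = 0) {u v : V} (huv : G.Adj u v) (hne : g s(u, v) ≠ 0) :
    ∃ S : Finset (Sym2 V), #S = 4 ∧ ∀ e ∈ S, e ∈ G.edgeSet ∧ g e ≠ 0 := by
  classical
  obtain ⟨w, hwu, hvw, hgvw⟩ := exists_adj_of_boundary_eq_zero hg huv hne
  obtain ⟨x, hxv, hwx, hgwx⟩ := exists_adj_of_boundary_eq_zero hg hvw hgvw
  obtain ⟨y, hyv, huy, hguy⟩ := exists_adj_of_boundary_eq_zero hg huv.symm (Sym2.eq_swap ▸ hne)
  have htriangle : ¬ G.Adj u w := fun huw => hG _ (is3Clique_triple_iff.2 ⟨huv, huw, hvw⟩)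
  have hxu : x ≠ u := fun h => htriangle (h ▸ hwx.symm)
  have hyw : y ≠ w := fun h => htriangle (h ▸ huy)
  refine ⟨{s(u, v), s(v, w), s(w, x), s(u, y)}, ?_, ?_⟩
  · rw [card_insert_of_notMem, card_insert_of_notMem, card_pair] <;> simp <;> grind
  · simp [huv, hvw, hwx, huy, hne, hgvw, hgwx, hguy]

lemma four_le_hammingNorm_of_mem_cycleSpace [Fintype G.edgeSet] (hG : G.CliqueFree 3)
    {f : G.edgeSet → ZMod 2} (hf : f ∈ cycleSpace G) (hne : f ≠ 0) : 4 ≤ hammingNorm f := by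
  classical
  obtain ⟨⟨e, he⟩, hfe⟩ := Function.ne_iff.1 hne
  have hextend (e : G.edgeSet) : Function.extend Subtype.val f 0 e = f e :=
    Subtype.val_injective.extend_apply ..
  induction e using Sym2.ind with
  | _ u v =>
    obtain ⟨S, hS, hSf⟩ := exists_card_eq_four_of_boundary_eq_zero hG (mem_cycleSpace_iff.1 hf) he
      ((hextend ⟨_, he⟩).trans_ne hfe)
    rw [← hS]
    refine (card_le_card fun e heS => ?_).trans (card_image_le (f := Subtype.val))
    obtain ⟨he, hfe⟩ := hSf e heS
    exact mem_image.2 ⟨⟨e, he⟩, by simpa [hextend] using (hextend ⟨e, he⟩).symm.trans_ne hfe, rfl⟩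

end CycleSpace

namespace MinorModel

section Faces

variable {V : Type*} {G : SimpleGraph V} (M : MinorModel G grid)

/-- The faces of the subgraph of the grid used by a minor: unit squares are identified across the
grid edges that are not kept. -/
def Face : Type :=
  Quot fun p q : ℤ × ℤ => ∃ x ∈ grid.edgeSet, ¬ M.IsKept x ∧ x.sup = p ∧ x.inf + 1 = q

/-- The face containing a unit square of the grid. -/
def face (p : ℤ × ℤ) : M.Face := Quot.mk _ p

/-- The edges of `G` whose links separate faces on which a face function takes different values. -/
def faceCoboundary (ψ : M.Face → ZMod 2) (e : Sym2 V) : ZMod 2 :=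
  coboundary (ψ ∘ M.face) (M.link e)

variable {M}

lemma face_eq_of_not_isKept {x : Sym2 (ℤ × ℤ)} (hx : x ∈ grid.edgeSet) (hkept : ¬ M.IsKept x) :
    M.face x.sup = M.face (x.inf + 1) :=
  Quot.sound ⟨x, hx, hkept, rfl, rfl⟩

variable (M) in
/-- The set of edges of `G` whose links are on the boundary of a given face. -/
noncomputable def faceBoundary (q : M.Face) : G.edgeSet → ZMod 2 :=
  open scoped Classical in G.edgeSet.domRestrict (M.faceCoboundary (Pi.single q 1))

lemma encard_faceBoundary_ne_zero_le (e : G.edgeSet) :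
    {f ∈ Set.range M.faceBoundary | f e ≠ 0}.encard ≤ 2 := by
  classical
  have hsubset : {f ∈ Set.range M.faceBoundary | f e ≠ 0} ⊆
      M.faceBoundary '' {M.face (M.link e).sup, M.face ((M.link e).inf + 1)} := by
    rintro _ ⟨⟨q, rfl⟩, hne⟩
    refine ⟨q, ?_, rfl⟩
    by_contra hq
    simp only [Set.mem_insert_iff, Set.mem_singleton_iff, not_or] at hq
    refine hne ?_
    simp [faceBoundary, faceCoboundary, coboundary, Ne.symm hq.1, Ne.symm hq.2]
  calc _ ≤ _ := (Set.encard_le_encard hsubset).trans (Set.encard_image_le ..)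
    _ ≤ 1 + 1 := (Set.encard_insert_le ..).trans_eq (by rw [Set.encard_singleton])
    _ = 2 := one_add_one_eq_two

variable [G.LocallyFinite]

lemma boundary_faceCoboundary [Finite G.edgeSet] (ψ : M.Face → ZMod 2) :
    boundary G (M.faceCoboundary ψ) = 0 := by
  refine M.boundary_comp_link_eq_zero (fun x hx hne => ?_) (boundary_coboundary (ψ ∘ M.face))
  by_contra hkept
  exact hne (by simp [coboundary, face_eq_of_not_isKept hx hkept, ZModModule.add_self])

lemma exists_eq_faceCoboundary [Finite V] {g : Sym2 V → ZMod 2} (hg : boundary G g = 0) :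
    ∃ ψ, ∀ e ∈ G.edgeSet, g e = M.faceCoboundary ψ e := by
  obtain ⟨w, hbd, hkept, hw⟩ := M.exists_cycle_of_boundary_eq_zero hg
  obtain ⟨φ, hφ⟩ := exists_eq_coboundary hbd
  refine ⟨Quot.lift φ ?_, fun e he => ?_⟩
  · rintro _ _ ⟨x, hx, hxkept, rfl, rfl⟩
    have hzero : w x = 0 := not_ne_iff.1 (mt (hkept x) hxkept)
    rw [hφ x hx] at hzero
    exact CharTwo.add_eq_zero.1 hzero
  · rw [← hw e he, hφ _ (M.link_mem_edgeSet he)]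
    rfl

lemma span_range_faceBoundary [Finite V] :
    Submodule.span (ZMod 2) (Set.range M.faceBoundary) = cycleSpace G := by
  classical
  refine le_antisymm (Submodule.span_le.2 ?_) fun f hf => ?_
  · rintro _ ⟨q, rfl⟩
    exact domRestrict_mem_cycleSpace (boundary_faceCoboundary _)
  have := Fintype.ofFinite G.edgeSet
  obtain ⟨ψ, hψ⟩ := M.exists_eq_faceCoboundary (mem_cycleSpace_iff.1 hf)
  let S : Finset M.Face := univ.biUnion fun e : G.edgeSet =>
    {M.face (M.link e).sup, M.face ((M.link e).inf + 1)}
  have hsum : f = ∑ q ∈ S, ψ q • M.faceBoundary q := by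
    ext e
    have hsup : M.face (M.link e).sup ∈ S := mem_biUnion.2 ⟨e, mem_univ e, by simp⟩
    have hinf : M.face ((M.link e).inf + 1) ∈ S := mem_biUnion.2 ⟨e, mem_univ e, by simp⟩
    rw [← Subtype.val_injective.extend_apply f 0 e, hψ e e.2]
    simp [faceBoundary, faceCoboundary, coboundary, Finset.sum_apply, Pi.single_apply, mul_add,
      sum_add_distrib, hsup, hinf]
  rw [hsum]
  exact Submodule.sum_mem _ fun q _ =>
    Submodule.smul_mem _ _ (Submodule.subset_span (Set.mem_range_self q))

end Faces

/-- The faces span the cycle space, each edge is on the boundary of at most two of them and every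
face has at least four edges. -/
theorem card_edgeSet_le_of_cliqueFree {V : Type*} {G : SimpleGraph V} [Fintype V]
    [Fintype G.edgeSet] (M : MinorModel G grid) (hG : G.CliqueFree 3) :
    Fintype.card G.edgeSet ≤ 2 * Fintype.card V := by
  classical
  have hfaces : 4 * Module.finrank (ZMod 2) (cycleSpace G) ≤ 2 * Fintype.card G.edgeSet := by
    rw [← span_range_faceBoundary (M := M)]
    refine mul_finrank_span_le ?_ encard_faceBoundary_ne_zero_le
    rintro _ ⟨q, rfl⟩
    exact four_le_hammingNorm_of_mem_cycleSpace hG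
      (domRestrict_mem_cycleSpace (boundary_faceCoboundary _))
  have hrank := card_edgeSet_le_finrank_cycleSpace_add_card (G := G)
  omega

end MinorModel

section Pixelation

open Filter Topology

/-- The point of the plane represented by a vertex of the grid at scale `ε`. -/
def gridPoint (ε : ℝ) (p : ℤ × ℤ) : ℝ × ℝ := (ε * p.1, ε * p.2)

/-- The vertices of the grid at scale `ε` that are within distance `ε` of a set. The distance on
`ℝ × ℝ` is the maximum of the coordinate distances. -/
def pixelate (ε : ℝ) (K : Set (ℝ × ℝ)) : Set (ℤ × ℤ) := {p | ∃ x ∈ K, dist x (gridPoint ε p) < ε}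

variable {ε : ℝ}

lemma pixelate_mono {K L : Set (ℝ × ℝ)} (h : K ⊆ L) : pixelate ε K ⊆ pixelate ε L :=
  fun _ ⟨x, hx, hd⟩ => ⟨x, h hx, hd⟩

lemma dist_gridPoint_lt_iff {x : ℝ × ℝ} {p : ℤ × ℤ} :
    dist x (gridPoint ε p) < ε ↔ dist x.1 (ε * p.1) < ε ∧ dist x.2 (ε * p.2) < ε := by
  rw [Prod.dist_eq, max_lt_iff, gridPoint]

/-- With `a = y / ε`, the integers `i` with `|a - i| < 1` are `⌊a⌋` and `⌈a⌉`. -/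
lemma dist_mul_lt_iff (hε : 0 < ε) {y : ℝ} {i : ℤ} :
    dist y (ε * i) < ε ↔ i = ⌊y / ε⌋ ∨ i = ⌈y / ε⌉ := by
  have hscale : dist y (ε * i) = ε * |y / ε - i| := by
    rw [Real.dist_eq, ← abs_of_pos hε, ← abs_mul, abs_of_pos hε, mul_sub, mul_div_cancel₀ _ hε.ne']
  rw [hscale, mul_lt_iff_lt_one_right hε, abs_sub_lt_iff, eq_comm, Int.floor_eq_iff, eq_comm,
    Int.ceil_eq_iff]
  constructor
  · rintro ⟨hlower, hupper⟩
    rcases le_total (i : ℝ) (y / ε) with h | h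
    · exact .inl ⟨h, by linarith⟩
    · exact .inr ⟨by linarith, h⟩
  · rintro (⟨hlower, hupper⟩ | ⟨hlower, hupper⟩) <;> constructor <;> linarith

lemma abs_sub_le_one_of_dist_mul_lt (hε : 0 < ε) {y : ℝ} {i j : ℤ} (hi : dist y (ε * i) < ε)
    (hj : dist y (ε * j) < ε) : |i - j| ≤ 1 := by
  rw [dist_mul_lt_iff hε] at hi hj
  have hle := Int.floor_le_ceil (y / ε)
  have hge := Int.ceil_le_floor_add_one (y / ε)
  rw [abs_le]
  omega

lemma exists_dist_gridPoint_lt (hε : 0 < ε) (x : ℝ × ℝ) : ∃ p, dist x (gridPoint ε p) < ε :=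
  ⟨(⌊x.1 / ε⌋, ⌊x.2 / ε⌋), dist_gridPoint_lt_iff.2
    ⟨(dist_mul_lt_iff hε).2 (.inl rfl), (dist_mul_lt_iff hε).2 (.inl rfl)⟩⟩

lemma finite_pixelate (hε : 0 < ε) {K : Set (ℝ × ℝ)} (hK : Bornology.IsBounded K) :
    (pixelate ε K).Finite := by
  obtain ⟨R, hR⟩ := hK.subset_closedBall 0
  have hcoord {y : ℝ} {i : ℤ} (hy : y ∈ Set.Icc (-R) R) (hi : dist y (ε * i) < ε) :
      i ∈ Set.Icc ⌊-R / ε⌋ ⌈R / ε⌉ := by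
    have hlower : ⌊-R / ε⌋ ≤ ⌊y / ε⌋ := Int.floor_mono (by gcongr; exact hy.1)
    have hupper : ⌈y / ε⌉ ≤ ⌈R / ε⌉ := Int.ceil_mono (by gcongr; exact hy.2)
    have hle := Int.floor_le_ceil (y / ε)
    rcases (dist_mul_lt_iff hε).1 hi with rfl | rfl
    · exact ⟨hlower, hle.trans hupper⟩
    · exact ⟨hlower.trans hle, hupper⟩
  have hbox := Set.finite_Icc ⌊-R / ε⌋ ⌈R / ε⌉
  refine (hbox.prod hbox).subset fun p ⟨x, hx, hp⟩ => ?_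
  have hxR := hR hx
  rw [Metric.mem_closedBall, dist_zero_right, Prod.norm_def, max_le_iff] at hxR
  rw [dist_gridPoint_lt_iff] at hp
  exact ⟨hcoord (abs_le.1 hxR.1) hp.1, hcoord (abs_le.1 hxR.2) hp.2⟩

lemma reachable_of_dist_gridPoint_lt (hε : 0 < ε) {K : Set (ℝ × ℝ)} {x : ℝ × ℝ} (hx : x ∈ K)
    {p q : pixelate ε K} (hp : dist x (gridPoint ε p) < ε) (hq : dist x (gridPoint ε q) < ε) :
    (grid.induce (pixelate ε K)).Reachable p q := by
  rw [dist_gridPoint_lt_iff] at hp hq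
  let r : pixelate ε K := ⟨(p.1.1, q.1.2), x, hx, dist_gridPoint_lt_iff.2 ⟨hp.1, hq.2⟩⟩
  have hpr : (grid.induce (pixelate ε K)).Reachable p r :=
    reachable_induce_grid (by simpa [r] using abs_sub_le_one_of_dist_mul_lt hε hp.2 hq.2)
  have hrq : (grid.induce (pixelate ε K)).Reachable r q :=
    reachable_induce_grid (by simpa [r] using abs_sub_le_one_of_dist_mul_lt hε hp.1 hq.1)
  exact hpr.trans hrq

lemma preconnected_induce_pixelate (hε : 0 < ε) {K : Set (ℝ × ℝ)} (hK : IsPreconnected K) :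
    (grid.induce (pixelate ε K)).Preconnected := by
  rintro ⟨p, x, hx, hp⟩ ⟨q, y, hy, hq⟩
  refine hK.induction₂ (fun x y => ∀ p q : pixelate ε K, dist x (gridPoint ε p) < ε →
    dist y (gridPoint ε q) < ε → (grid.induce (pixelate ε K)).Reachable p q)
    (fun x hx => ?_) (fun x y z _ hy _ hxy hyz p r hp hr => ?_)
    (fun x y _ _ hxy q p hq hp => (hxy p q hp hq).symm) hx hy _ _ hp hq
  · obtain ⟨r, hr⟩ := exists_dist_gridPoint_lt hε x
    filter_upwards [self_mem_nhdsWithin,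
      mem_nhdsWithin_of_mem_nhds (Metric.isOpen_ball.mem_nhds hr)] with y hy hyr p q hp hq
    exact (reachable_of_dist_gridPoint_lt hε hx hp (q := ⟨r, x, hx, hr⟩) hr).trans
      (reachable_of_dist_gridPoint_lt hε hy hyr hq)
  · obtain ⟨q, hq⟩ := exists_dist_gridPoint_lt hε y
    exact (hxy p ⟨q, y, hy, hq⟩ hp hq).trans (hyz ⟨q, y, hy, hq⟩ r hq hr)

lemma eventually_disjoint_pixelate {K L : Set (ℝ × ℝ)} (hK : IsCompact K) (hL : IsClosed L)
    (h : Disjoint K L) : ∀ᶠ ε in 𝓝[>] (0 : ℝ), Disjoint (pixelate ε K) (pixelate ε L) := by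
  obtain ⟨δ, hδ, hdisj⟩ := h.exists_thickenings hK hL
  filter_upwards [Ioo_mem_nhdsGT hδ] with ε hε
  rw [Set.disjoint_left]
  rintro p ⟨x, hx, hxp⟩ ⟨y, hy, hyp⟩
  exact Set.disjoint_left.1 hdisj
    (Metric.mem_thickening_iff.2 ⟨x, hx, (_root_.dist_comm ..).trans_lt (hxp.trans hε.2)⟩)
    (Metric.mem_thickening_iff.2 ⟨y, hy, (_root_.dist_comm ..).trans_lt (hyp.trans hε.2)⟩)

end Pixelation

section Drawings

variable {V P : Type*}

lemma exists_preconnected_subset (Γ : SimpleGraph P) {N : Set P} {p : P} (hp : p ∈ N) :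
    ∃ T ⊆ N, p ∈ T ∧ (Γ.induce T).Preconnected ∧ ∀ q ∈ T, ∀ r ∈ N, Γ.Adj q r → r ∈ T := by
  classical
  let T : Set P := {q | ∃ W : Γ.Walk p q, ∀ r ∈ W.support, r ∈ N}
  have hpT : p ∈ T := ⟨.nil, by simpa using hp⟩
  refine ⟨T, fun q ⟨W, hW⟩ => hW q W.end_mem_support, hpT, ?_, ?_⟩
  · refine Connected.preconnected (induce_connected_of_patches p hpT ?_)
    rintro q ⟨W, hW⟩
    refine ⟨{r | r ∈ W.support}, fun r hr => ⟨W.takeUntil r hr, fun x hx => ?_⟩,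
      W.start_mem_support, W.end_mem_support, W.connected_induce_support.preconnected _ _⟩
    exact hW x (W.support_takeUntil_subset_support hr hx)
  · rintro q ⟨W, hW⟩ r hr hqr
    exact ⟨W.concat hqr, by simpa [Walk.support_concat, or_imp, forall_and] using ⟨hW, hr⟩⟩

lemma exists_adj_of_preconnected {Γ : SimpleGraph P} {S T : Set P}
    (hS : (Γ.induce S).Preconnected) {p q : P} (hp : p ∈ S) (hpT : p ∈ T) (hq : q ∈ S)
    (hqT : q ∉ T) : ∃ r ∈ S ∩ T, ∃ r' ∈ S \ T, Γ.Adj r r' := by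
  obtain ⟨W⟩ := hS ⟨p, hp⟩ ⟨q, hq⟩
  obtain ⟨d, -, hfst, hsnd⟩ := W.exists_boundary_dart (Subtype.val ⁻¹' T) hpT hqT
  exact ⟨d.fst, ⟨d.fst.2, hfst⟩, d.snd, ⟨d.snd.2, hsnd⟩, d.adj⟩

lemma nonempty_minorModel [Nonempty P] {G : SimpleGraph V} {Γ : SimpleGraph P}
    {branch : V → Set P} (hfinite : ∀ v, (branch v).Finite)
    (hdisj : Pairwise fun u v => Disjoint (branch u) (branch v))
    (hconn : ∀ v, (Γ.induce (branch v)).Preconnected)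
    (hadj : ∀ u v, G.Adj u v → ∃ p ∈ branch u, ∃ q ∈ branch v, Γ.Adj p q) :
    Nonempty (MinorModel G Γ) := by
  have hlink (e : Sym2 V) : ∃ x : Sym2 P, ∀ u v, e = s(u, v) → G.Adj u v →
      ∃ p ∈ branch u, ∃ q ∈ branch v, Γ.Adj p q ∧ x = s(p, q) := by
    induction e using Sym2.ind with
    | _ a b =>
      by_cases hab : G.Adj a b
      · obtain ⟨p, hp, q, hq, hpq⟩ := hadj a b hab
        refine ⟨s(p, q), fun u v heq _ => ?_⟩
        rcases Sym2.eq_iff.1 heq with ⟨rfl, rfl⟩ | ⟨rfl, rfl⟩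
        · exact ⟨p, hp, q, hq, hpq, rfl⟩
        · exact ⟨q, hq, p, hp, hpq.symm, Sym2.eq_swap⟩
      · exact ⟨s(Classical.arbitrary P, Classical.arbitrary P), fun u v heq huv =>
          absurd ((G.adj_congr_of_sym2 heq).2 huv) hab⟩
  choose link hlink using hlink
  refine ⟨⟨fun v => (hfinite v).toFinset, link, fun u v huv => ?_, fun v => ?_, fun u v huv => ?_⟩⟩
  · simpa using hdisj huv
  · exact (hfinite v).coe_toFinset.symm ▸ hconn v
  · simpa using hlink _ u v rfl huv

/-- A combinatorial drawing of `G` in a graph `Γ`. Every vertex `v` has a connected set `star v`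
containing a chosen `root v`, made up of connected sets `ray d` that run from the root towards the
neighbours of `v` and meet no star except those of the two ends of `d`. -/
structure StarDrawing (G : SimpleGraph V) (Γ : SimpleGraph P) where
  root : V → P
  star : V → Set P
  ray : G.Dart → Set P
  finite_star : ∀ v, (star v).Finite
  preconnected_star : ∀ v, (Γ.induce (star v)).Preconnected
  disjoint_star : ∀ ⦃u v⦄, u ≠ v → ¬ G.Adj u v → Disjoint (star u) (star v)
  root_mem_star : ∀ v, root v ∈ star v
  root_notMem_star : ∀ ⦃u v⦄, u ≠ v → root u ∉ star v
  ray_subset_star : ∀ d, ray d ⊆ star d.fst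
  preconnected_ray : ∀ d, (Γ.induce (ray d)).Preconnected
  root_mem_ray : ∀ d, root d.fst ∈ ray d
  ray_inter_star : ∀ d, (ray d ∩ star d.snd).Nonempty
  disjoint_ray_star : ∀ d v, v ≠ d.fst → v ≠ d.snd → Disjoint (ray d) (star v)

namespace StarDrawing

variable {G : SimpleGraph V} {Γ : SimpleGraph P}

/-- A star can be trimmed to the part around its root that avoids the stars of a set of vertices.
Each ray towards one of these vertices leaves the trimmed star for the star of its target, which is
the only star of the set that it meets. -/
lemma exists_trimmed_star (D : StarDrawing G Γ) {B : Set V} {a : V} (ha : a ∉ B) :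
    ∃ T ⊆ D.star a, (Γ.induce T).Preconnected ∧ (∀ b ∈ B, Disjoint T (D.star b)) ∧
      ∀ b ∈ B, G.Adj a b → ∃ p ∈ T, ∃ q ∈ D.star b, Γ.Adj p q := by
  have hroot : D.root a ∈ {p ∈ D.star a | ∀ b ∈ B, p ∉ D.star b} :=
    ⟨D.root_mem_star a, fun b hb => D.root_notMem_star (ne_of_mem_of_not_mem hb ha).symm⟩
  obtain ⟨T, hTsub, hrootT, hconn, hclosed⟩ := exists_preconnected_subset Γ hroot
  refine ⟨T, fun p hp => (hTsub hp).1, hconn,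
    fun b hb => Set.disjoint_left.2 fun p hp => (hTsub hp).2 b hb, fun b hb hab => ?_⟩
  let d : G.Dart := ⟨(a, b), hab⟩
  obtain ⟨t, htray, htstar⟩ := D.ray_inter_star d
  obtain ⟨p, ⟨-, hpT⟩, q, ⟨hqray, hqT⟩, hpq⟩ := exists_adj_of_preconnected (D.preconnected_ray d)
    (D.root_mem_ray d) hrootT htray fun ht => (hTsub ht).2 b hb htstar
  obtain ⟨b', hb', hqb'⟩ : ∃ b' ∈ B, q ∈ D.star b' := by
    by_contra! h
    exact hqT (hclosed p hpT q ⟨D.ray_subset_star d hqray, h⟩ hpq)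
  obtain rfl : b' = b := by
    by_contra h
    exact Set.disjoint_left.1
      (D.disjoint_ray_star d b' (ne_of_mem_of_not_mem hb' ha) h) hqray hqb'
  exact ⟨p, hpT, q, hqb', hpq⟩

lemma nonempty_minorModel [Nonempty P] (D : StarDrawing G Γ) (c : G.Coloring Bool) :
    Nonempty (MinorModel G Γ) := by
  choose! T hTsub hTconn hTdisj hTadj using
    fun (a : V) (ha : a ∉ {b | c b = true}) => D.exists_trimmed_star ha
  let branch (v : V) : Set P := if c v = true then D.star v else T v
  have hkeep {v : V} (hv : c v = true) : branch v = D.star v := if_pos hv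
  have htrim {v : V} (hv : ¬ c v = true) : branch v = T v := if_neg hv
  have hsub (v : V) : branch v ⊆ D.star v := by
    by_cases hv : c v = true
    · exact (hkeep hv).subset
    · exact (htrim hv).trans_subset (hTsub v hv)
  refine PlanarMatching.nonempty_minorModel (branch := branch)
    (fun v => (D.finite_star v).subset (hsub v)) (fun u v huv => ?_) (fun v => ?_)
    (fun u v huv => ?_)
  · by_cases hc : c u = c v
    · exact (D.disjoint_star huv fun hadj => c.valid hadj hc).mono (hsub u) (hsub v)
    · by_cases hu : c u = true
      · have hv : ¬ c v = true := fun hv => hc (hu.trans hv.symm)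
        exact (hTdisj v hv u hu).symm.mono (hkeep hu).subset (htrim hv).subset
      · have hv : c v = true := by grind
        exact (hTdisj u hu v hv).mono (htrim hu).subset (hkeep hv).subset
  · by_cases hv : c v = true
    · exact hkeep hv ▸ D.preconnected_star v
    · exact htrim hv ▸ hTconn v hv
  · by_cases hu : c u = true
    · have hv : ¬ c v = true := fun hv => c.valid huv (hu.trans hv.symm)
      obtain ⟨p, hp, q, hq, hpq⟩ := hTadj v hv u hu huv.symm
      exact ⟨q, hkeep hu ▸ hq, p, htrim hv ▸ hp, hpq.symm⟩
    · have hv : c v = true := by simpa [hu] using (c.valid huv).symm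
      obtain ⟨p, hp, q, hq, hpq⟩ := hTadj u hu v hv huv
      exact ⟨p, htrim hu ▸ hp, q, hkeep hv ▸ hq, hpq⟩

end StarDrawing

end Drawings

section Planarity

open Filter Topology

variable {V : Type*} {G : SimpleGraph V}

/-- A drawing of `G` in the plane in which every edge is cut into two halves: `halfEdge d` is the
half of the edge `d.edge` at `d.fst`. Two halves at different vertices meet only if they belong to
the same edge. -/
structure HalfEdgeDrawing (G : SimpleGraph V) where
  pos : V → ℝ × ℝ
  halfEdge : G.Dart → Set (ℝ × ℝ)
  pos_injective : Function.Injective pos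
  isCompact_halfEdge : ∀ d, IsCompact (halfEdge d)
  isPreconnected_halfEdge : ∀ d, IsPreconnected (halfEdge d)
  pos_fst_mem_halfEdge : ∀ d, pos d.fst ∈ halfEdge d
  halfEdge_inter_symm : ∀ d, (halfEdge d ∩ halfEdge d.symm).Nonempty
  eq_fst_of_pos_mem : ∀ ⦃w d⦄, pos w ∈ halfEdge d → w = d.fst
  snd_eq_of_mem : ∀ ⦃d d' x⦄, x ∈ halfEdge d → x ∈ halfEdge d' → d.fst ≠ d'.fst → d.snd = d'.fst

lemma nonempty_halfEdgeDrawing (hG : G.IsPlanar) : Nonempty (HalfEdgeDrawing G) := by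
  obtain ⟨pos, γ, hpos, hγ, hsymm, havoid, hmeet⟩ := hG
  let half : unitInterval := ⟨1 / 2, by norm_num, by norm_num⟩
  have half_symm : unitInterval.symm half = half := Subtype.ext (by norm_num [half])
  have ne_one {t : unitInterval} (ht : t ≤ half) : t ≠ 1 :=
    (ht.trans_lt (show (1 / 2 : ℝ) < 1 by norm_num)).ne
  have eq_fst {w : V} {d : G.Dart} (hw : pos w ∈ γ d.adj '' Set.Iic half) : w = d.fst := by
    obtain ⟨t, ht, htw⟩ := hw
    by_cases h0 : t = 0
    · exact hpos (htw.symm.trans (h0 ▸ (hγ d.adj).2.2.1))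
    · exact absurd htw (havoid d.adj t h0 (ne_one ht) w)
  refine ⟨⟨pos, fun d => γ d.adj '' Set.Iic half, hpos, fun d => ?_, fun d => ?_, fun d => ?_,
    fun d => ?_, fun w d => eq_fst, fun d d' x hd hd' hne => ?_⟩⟩
  · exact isClosed_Iic.isCompact.image (hγ d.adj).1
  · exact isPreconnected_Iic.image _ (hγ d.adj).1.continuousOn
  · exact ⟨0, unitInterval.nonneg', (hγ d.adj).2.2.1⟩
  · exact ⟨γ d.adj half, ⟨half, Set.self_mem_Iic, rfl⟩, half, Set.self_mem_Iic,
      (congrArg _ half_symm).symm.trans (hsymm d.adj half)⟩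
  · by_cases hedge : d.edge = d'.edge
    · rcases dart_edge_eq_iff d d' |>.1 hedge with rfl | rfl
      · exact absurd rfl hne
      · rfl
    · obtain ⟨t, ht, rfl⟩ := hd
      obtain ⟨t', ht', heq⟩ := hd'
      obtain rfl := (hmeet d.adj d'.adj t t' hedge heq.symm).resolve_right (ne_one ht)
      exact absurd (eq_fst ⟨t', ht', heq.trans (hγ d.adj).2.2.1⟩) hne

namespace HalfEdgeDrawing

variable (D : HalfEdgeDrawing G)

/-- A vertex together with the halves of its edges. -/
def star (v : V) : Set (ℝ × ℝ) := {D.pos v} ∪ ⋃ (d : G.Dart) (_ : d.fst = v), D.halfEdge d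

lemma mem_star {v : V} {x : ℝ × ℝ} :
    x ∈ D.star v ↔ x = D.pos v ∨ ∃ d : G.Dart, d.fst = v ∧ x ∈ D.halfEdge d := by
  simp [star]

lemma pos_mem_star (v : V) : D.pos v ∈ D.star v := D.mem_star.2 (.inl rfl)

lemma halfEdge_subset_star (d : G.Dart) : D.halfEdge d ⊆ D.star d.fst :=
  fun _ hx => D.mem_star.2 (.inr ⟨d, rfl, hx⟩)

lemma isCompact_star [Finite V] (v : V) : IsCompact (D.star v) := by
  have : Finite G.Dart := .of_injective _ Dart.toProd_injective
  exact isCompact_singleton.union <|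
    isCompact_iUnion fun d => isCompact_iUnion fun _ => D.isCompact_halfEdge d

lemma isPreconnected_star (v : V) : IsPreconnected (D.star v) := by
  refine isPreconnected_of_forall (D.pos v) fun x hx => ?_
  rcases D.mem_star.1 hx with rfl | ⟨d, rfl, hxd⟩
  · exact ⟨{D.pos v}, by simpa using hx, rfl, rfl, isPreconnected_singleton⟩
  · exact ⟨D.halfEdge d, D.halfEdge_subset_star d, D.pos_fst_mem_halfEdge d, hxd,
      D.isPreconnected_halfEdge d⟩

lemma pos_notMem_star {u v : V} (huv : u ≠ v) : D.pos u ∉ D.star v := by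
  rw [mem_star]
  rintro (h | ⟨d, rfl, hd⟩)
  · exact huv (D.pos_injective h)
  · exact huv (D.eq_fst_of_pos_mem hd)

lemma disjoint_halfEdge_star {d : G.Dart} {v : V} (hfst : v ≠ d.fst) (hsnd : v ≠ d.snd) :
    Disjoint (D.halfEdge d) (D.star v) := by
  refine Set.disjoint_left.2 fun x hxd hxv => ?_
  rcases D.mem_star.1 hxv with rfl | ⟨d', rfl, hxd'⟩
  · exact hfst (D.eq_fst_of_pos_mem hxd)
  · exact hsnd (D.snd_eq_of_mem hxd hxd' hfst.symm).symm

lemma disjoint_star {u v : V} (hne : u ≠ v) (hadj : ¬ G.Adj u v) :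
    Disjoint (D.star u) (D.star v) := by
  refine Set.disjoint_left.2 fun x hxu hxv => ?_
  rcases D.mem_star.1 hxu with rfl | ⟨d, rfl, hxd⟩
  · exact D.pos_notMem_star hne hxv
  · have hsnd : v ≠ d.snd := fun h => hadj (h ▸ d.adj)
    exact Set.disjoint_left.1 (D.disjoint_halfEdge_star hne.symm hsnd) hxd hxv

lemma exists_pixelate_disjoint [Finite V] : ∃ ε > (0 : ℝ),
    (∀ u v, u ≠ v → Disjoint (pixelate ε {D.pos u}) (pixelate ε (D.star v))) ∧
    (∀ d v, v ≠ d.fst → v ≠ d.snd →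
      Disjoint (pixelate ε (D.halfEdge d)) (pixelate ε (D.star v))) ∧
    ∀ u v, u ≠ v → ¬ G.Adj u v → Disjoint (pixelate ε (D.star u)) (pixelate ε (D.star v)) := by
  have : Finite G.Dart := .of_injective _ Dart.toProd_injective
  have hclosed (v : V) : IsClosed (D.star v) := (D.isCompact_star v).isClosed
  have hpos : ∀ᶠ ε in 𝓝[>] (0 : ℝ), 0 < ε := eventually_mem_nhdsWithin
  refine (hpos.and (.and ?_ (.and ?_ ?_))).exists <;> simp only [eventually_all]
  · exact fun u v huv => eventually_disjoint_pixelate isCompact_singleton (hclosed v)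
      (Set.disjoint_singleton_left.2 (D.pos_notMem_star huv))
  · exact fun d v hfst hsnd => eventually_disjoint_pixelate (D.isCompact_halfEdge d) (hclosed v)
      (D.disjoint_halfEdge_star hfst hsnd)
  · exact fun u v hne hadj => eventually_disjoint_pixelate (D.isCompact_star u) (hclosed v)
      (D.disjoint_star hne hadj)

lemma nonempty_starDrawing [Finite V] (D : HalfEdgeDrawing G) : Nonempty (StarDrawing G grid) := by
  obtain ⟨ε, hε, hpos, hhalf, hstar⟩ := D.exists_pixelate_disjoint
  choose root hroot using fun v => exists_dist_gridPoint_lt hε (D.pos v)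
  refine ⟨{
    root := root
    star := fun v => pixelate ε (D.star v)
    ray := fun d => pixelate ε (D.halfEdge d)
    finite_star := fun v => finite_pixelate hε (D.isCompact_star v).isBounded
    preconnected_star := fun v => preconnected_induce_pixelate hε (D.isPreconnected_star v)
    disjoint_star := hstar
    root_mem_star := fun v => ⟨_, D.pos_mem_star v, hroot v⟩
    root_notMem_star := fun u v huv => Set.disjoint_left.1 (hpos u v huv) ⟨_, rfl, hroot u⟩
    ray_subset_star := fun d => pixelate_mono (D.halfEdge_subset_star d)
    preconnected_ray := fun d => preconnected_induce_pixelate hε (D.isPreconnected_halfEdge d)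
    root_mem_ray := fun d => ⟨_, D.pos_fst_mem_halfEdge d, hroot d.fst⟩
    ray_inter_star := fun d => ?_
    disjoint_ray_star := hhalf }⟩
  obtain ⟨x, hx, hx'⟩ := D.halfEdge_inter_symm d
  obtain ⟨p, hp⟩ := exists_dist_gridPoint_lt hε x
  exact ⟨p, ⟨x, hx, hp⟩, x, D.halfEdge_subset_star d.symm hx', hp⟩

end HalfEdgeDrawing

lemma card_edgeSet_le_of_isPlanar [Fintype V] [Fintype G.edgeSet] (hG : G.IsPlanar)
    (hcol : G.Colorable 2) : Fintype.card G.edgeSet ≤ 2 * Fintype.card V := by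
  obtain ⟨D⟩ := nonempty_halfEdgeDrawing hG
  obtain ⟨D'⟩ := D.nonempty_starDrawing
  obtain ⟨M⟩ := D'.nonempty_minorModel (hcol.toColoring (by simp))
  exact M.card_edgeSet_le_of_cliqueFree (hcol.cliqueFree (by norm_num))

lemma isPlanar_of_isContained {W : Type*} {H : SimpleGraph W} (h : H ⊑ G) (hG : G.IsPlanar) :
    H.IsPlanar := by
  obtain ⟨f⟩ := h
  obtain ⟨pos, γ, hpos, hγ, hsymm, havoid, hmeet⟩ := hG
  refine ⟨pos ∘ f, fun u v h => γ (f.toHom.map_adj h), hpos.comp f.injective,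
    fun u v h => hγ _, fun u v h => hsymm _, fun u v h t h0 h1 w => havoid _ t h0 h1 (f w),
    fun u v u' v' h h' t t' hne => hmeet _ _ t t' fun heq => hne ?_⟩
  exact Sym2.map.injective f.injective heq

lemma card_interedges_le_of_isPlanar [DecidableRel G.Adj] (hG : G.IsPlanar)
    {A B : Finset V} (hAB : Disjoint A B) : #(G.interedges A B) ≤ 2 * (#A + #B) := by
  classical
  let H := (G.between A B).induce (A ∪ B : Finset V)
  have hHG : H ⊑ G := .trans ⟨Copy.induce _ _⟩ (.of_le between_le)
  have hcol : H.Colorable 2 :=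
    (between_isBipartite (disjoint_coe.2 hAB)).of_hom (Embedding.induce _).toHom
  have hinj : Set.InjOn (fun p : V × V => s(p.1, p.2)) (G.interedges A B) := by
    rintro ⟨a, b⟩ hab ⟨a', b'⟩ hab' heq
    rw [mem_coe, mem_interedges_iff] at hab hab'
    rcases Sym2.eq_iff.1 heq with ⟨rfl, rfl⟩ | ⟨rfl, rfl⟩
    · rfl
    · exact absurd hab'.2.1 (disjoint_left.1 hAB hab.1)
  have hsub : (G.interedges A B).image (fun p => s(p.1, p.2)) ⊆
      H.edgeFinset.image (Sym2.map Subtype.val) := by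
    refine image_subset_iff.2 fun ⟨a, b⟩ hab => ?_
    obtain ⟨ha, hb, hadj⟩ := G.mem_interedges_iff.1 hab
    exact mem_image.2 ⟨s(⟨a, mem_union_left _ ha⟩, ⟨b, mem_union_right _ hb⟩),
      mem_edgeFinset.2 ⟨hadj, .inl ⟨ha, hb⟩⟩, rfl⟩
  calc #(G.interedges A B) = #((G.interedges A B).image fun p => s(p.1, p.2)) :=
        (card_image_of_injOn hinj).symm
    _ ≤ #H.edgeFinset := (card_le_card hsub).trans card_image_le
    _ = Fintype.card H.edgeSet := edgeFinset_card
    _ ≤ 2 * Fintype.card (A ∪ B : Finset V) :=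
        card_edgeSet_le_of_isPlanar (isPlanar_of_isContained hHG hG) hcol
    _ = 2 * (#A + #B) := by rw [Fintype.card_coe, card_union_of_disjoint hAB]

end Planarity

section Matching

variable {V : Type*} {G : SimpleGraph V}

/-- The graph obtained from `G` by deleting the vertices of `U`. They are kept as isolated vertices,
so that the vertex type does not change. -/
def isolate (G : SimpleGraph V) (U : Finset V) : SimpleGraph V where
  Adj u v := G.Adj u v ∧ u ∉ U ∧ v ∉ U
  symm := ⟨fun _ _ h => ⟨h.1.symm, h.2.2, h.2.1⟩⟩
  loopless := ⟨fun _ h => h.1.ne rfl⟩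

lemma isolate_le (G : SimpleGraph V) (U : Finset V) : isolate G U ≤ G := fun _ _ h => h.1

lemma isolate_empty : isolate G ∅ = G := by
  ext; simp [isolate]

/-- Matchings of `G`, encoded as the involutions that move a vertex only to a neighbour: matched
vertices are exchanged with their partners and unmatched vertices are fixed. -/
structure IsMatchingPerm (G : SimpleGraph V) (σ : Equiv.Perm V) : Prop where
  involutive : Function.Involutive σ
  adj : ∀ ⦃v⦄, σ v ≠ v → G.Adj v (σ v)

lemma isMatchingPerm_one : IsMatchingPerm G 1 :=
  ⟨fun _ => rfl, fun _ h => absurd rfl h⟩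

lemma IsMatchingPerm.mono {H : SimpleGraph V} {σ : Equiv.Perm V} (hσ : IsMatchingPerm G σ)
    (h : G ≤ H) : IsMatchingPerm H σ :=
  ⟨hσ.involutive, fun _ hv => h (hσ.adj hv)⟩

lemma IsMatchingPerm.apply_eq_of_mem {U : Finset V} {σ : Equiv.Perm V}
    (hσ : IsMatchingPerm (isolate G U) σ) {v : V} (hv : v ∈ U) : σ v = v := by
  by_contra h
  exact (hσ.adj h).2.1 hv

/-- The subgraph of `G` formed by the edges of a matching. -/
def IsMatchingPerm.toSubgraph {σ : Equiv.Perm V} (hσ : IsMatchingPerm G σ) : G.Subgraph where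
  verts := {v | σ v ≠ v}
  Adj u v := σ u = v ∧ u ≠ v
  adj_sub := by
    rintro u _ ⟨rfl, hu⟩
    exact hσ.adj hu.symm
  edge_vert := by
    rintro u _ ⟨rfl, hu⟩
    exact hu.symm
  symm := ⟨by
    rintro u _ ⟨rfl, hu⟩
    exact ⟨hσ.involutive u, hu.symm⟩⟩

lemma IsMatchingPerm.isMatching_toSubgraph {σ : Equiv.Perm V} (hσ : IsMatchingPerm G σ) :
    hσ.toSubgraph.IsMatching :=
  fun v hv => ⟨σ v, ⟨rfl, Ne.symm hv⟩, fun _ hw => hw.1.symm⟩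

variable [DecidableEq V]

lemma IsMatchingPerm.mul_swap {σ : Equiv.Perm V} (hσ : IsMatchingPerm G σ) {x y : V}
    (hx : σ x = x) (hy : σ y = y) (hxy : G.Adj x y) : IsMatchingPerm G (σ * Equiv.swap x y) := by
  have := hxy.symm
  constructor
  · intro v
    have := hσ.involutive v
    grind [Equiv.Perm.mul_apply]
  · intro v hv
    have := @hσ.adj v
    grind [Equiv.Perm.mul_apply]

lemma IsMatchingPerm.conj_swap {σ : Equiv.Perm V} (hσ : IsMatchingPerm G σ) {x y : V}
    (hx : σ x = x) (hy : σ y ≠ y) (hxy : G.Adj x y) :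
    IsMatchingPerm G (Equiv.swap x (σ y) * σ * Equiv.swap x (σ y)) := by
  have := hxy.symm
  have := hσ.involutive y
  constructor
  · intro v
    simp [hσ.involutive _]
  · intro v hv
    have := @hσ.adj v
    have := hσ.involutive v
    grind [Equiv.Perm.mul_apply]

variable [Fintype V]

lemma IsMatchingPerm.even_card_support {σ : Equiv.Perm V} (hσ : IsMatchingPerm G σ) :
    Even #σ.support :=
  even_iff_two_dvd.2 (Equiv.Perm.two_dvd_card_support (Equiv.ext hσ.involutive))

lemma IsMatchingPerm.two_mul_ncard_edgeSet_toSubgraph {σ : Equiv.Perm V}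
    (hσ : IsMatchingPerm G σ) : 2 * hσ.toSubgraph.edgeSet.ncard = #σ.support := by
  classical
  have hdegree (v : V) : hσ.toSubgraph.spanningCoe.degree v = if σ v ≠ v then 1 else 0 := by
    rw [← card_neighborFinset_eq_degree]
    split_ifs with hv
    · refine Finset.card_eq_one.2 ⟨σ v, ?_⟩
      ext w
      rw [mem_neighborFinset, Finset.mem_singleton]
      exact ⟨fun h => h.1.symm, fun h => ⟨h.symm, h ▸ hv.symm⟩⟩
    · refine Finset.card_eq_zero.2 (Finset.eq_empty_of_forall_notMem fun w hw => ?_)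
      rw [mem_neighborFinset] at hw
      exact hw.2 ((not_not.1 hv).symm.trans hw.1)
  rw [← Subgraph.edgeSet_spanningCoe, ← coe_edgeFinset, Set.ncard_coe_finset,
    ← sum_degrees_eq_twice_card_edges, Finset.sum_congr rfl fun v _ => hdegree v,
    ← Finset.card_filter]
  rfl

/-- Maximum matchings, in the encoding of `IsMatchingPerm`. -/
structure IsMaxMatchingPerm (G : SimpleGraph V) (σ : Equiv.Perm V) : Prop
    extends IsMatchingPerm G σ where
  card_le : ∀ ⦃τ⦄, IsMatchingPerm G τ → #τ.support ≤ #σ.support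

lemma exists_isMaxMatchingPerm (G : SimpleGraph V) : ∃ σ, IsMaxMatchingPerm G σ := by
  obtain ⟨σ, hσ, hmax⟩ := {σ | IsMatchingPerm G σ}.toFinite.exists_maximalFor
    (fun σ => #σ.support) _ ⟨1, isMatchingPerm_one⟩
  exact ⟨σ, hσ, fun τ hτ => (le_total _ _).elim id (hmax hτ)⟩

lemma IsMaxMatchingPerm.card_eq {σ τ : Equiv.Perm V} (hσ : IsMaxMatchingPerm G σ)
    (hτ : IsMaxMatchingPerm G τ) : #σ.support = #τ.support :=
  (hτ.card_le hσ.1).antisymm (hσ.card_le hτ.1)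

lemma IsMaxMatchingPerm.apply_ne_of_adj {σ : Equiv.Perm V} (hσ : IsMaxMatchingPerm G σ) {x y : V}
    (hxy : G.Adj x y) (hx : σ x = x) : σ y ≠ y := by
  intro hy
  have hdisj : σ.Disjoint (Equiv.swap x y) := by
    intro v
    grind
  have hcard := hσ.card_le (hσ.mul_swap hx hy hxy)
  rw [hdisj.card_support_mul, Equiv.Perm.card_support_swap hxy.ne] at hcard
  omega

/-- The edge of `τ` at `x` replaces the edge of `σ` at `τ x`. -/
lemma IsMaxMatchingPerm.exists_agreement_lt {σ τ : Equiv.Perm V} (hσ : IsMaxMatchingPerm G σ)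
    (hτ : IsMatchingPerm G τ) {x w : V} (hσx : σ x = x) (hτx : τ x ≠ x) (hσw : σ w = w)
    (hwx : w ≠ x) :
    ∃ σ', IsMaxMatchingPerm G σ' ∧ σ' w = w ∧ #{v | τ v = σ v} < #{v | τ v = σ' v} := by
  have hadj := hτ.adj hτx
  have hσy := hσ.apply_ne_of_adj hadj hσx
  refine ⟨_, ⟨hσ.conj_swap hσx hσy hadj, fun ρ hρ => ?_⟩, ?_, ?_⟩
  · have hconj := Equiv.Perm.card_support_conj (σ := Equiv.swap x (σ (τ x))) (τ := σ)
    rw [Equiv.swap_inv] at hconj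
    exact (hσ.card_le hρ).trans_eq hconj.symm
  · have := hσ.involutive (τ x)
    grind [Equiv.Perm.mul_apply]
  · refine Finset.card_lt_card (Finset.ssubset_iff.2 ⟨x, by simp [hσx, hτx], fun v hv => ?_⟩)
    have := hσ.involutive (τ x)
    have := hσ.involutive v
    have := hτ.involutive v
    have := hτ.involutive x
    simp only [Finset.mem_insert, Finset.mem_filter_univ, Equiv.Perm.mul_apply] at hv ⊢
    grind

/-- Gallai's relation: no maximum matching misses both of the distinct vertices `u` and `v`. -/
def GallaiRel (G : SimpleGraph V) (u v : V) : Prop :=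
  u = v ∨ ∀ σ, IsMaxMatchingPerm G σ → σ u = u → σ v ≠ v

lemma GallaiRel.symm {u v : V} (h : GallaiRel G u v) : GallaiRel G v u :=
  h.imp Eq.symm fun h σ hσ hv hu => h σ hσ hu hv

lemma gallaiRel_of_adj {u v : V} (h : G.Adj u v) : GallaiRel G u v :=
  .inr fun _ hσ => hσ.apply_ne_of_adj h

lemma GallaiRel.eq_of_apply_eq {u v : V} (h : GallaiRel G u v) {σ : Equiv.Perm V}
    (hσ : IsMaxMatchingPerm G σ) (hu : σ u = u) (hv : σ v = v) : u = v :=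
  h.resolve_right fun h => h σ hσ hu hv

/-- Otherwise let `τ` miss both `u` and `v`, and let `σ` miss `w` and agree with `τ` as much as
possible. As `σ` covers `u` and `v`, some `x ≠ w` is covered by `τ` only, and exchanging edges at
`x` increases the agreement. -/
lemma GallaiRel.trans {u v w : V} (huw : GallaiRel G u w) (hwv : GallaiRel G w v)
    (hw : ∃ σ, IsMaxMatchingPerm G σ ∧ σ w = w) : GallaiRel G u v := by
  rcases huw with rfl | huw
  · exact hwv
  rcases hwv with rfl | hwv
  · exact .inr huw
  refine or_iff_not_imp_left.2 fun huv τ hτ hτu hτv => ?_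
  obtain ⟨σ, ⟨hσ, hσw⟩, hagree⟩ := {σ | IsMaxMatchingPerm G σ ∧ σ w = w}.toFinite.exists_maximalFor
    (fun σ => #{v | τ v = σ v}) _ hw
  have htwo : 2 ≤ #(σ.support \ τ.support) := by
    rw [← Finset.card_pair huv]
    refine Finset.card_le_card (Finset.insert_subset ?_ (Finset.singleton_subset_iff.2 ?_))
    · simpa [hτu] using fun h => huw σ hσ h hσw
    · simp [hτv, hwv σ hσ hσw]
  rw [← Finset.card_sdiff_comm (hτ.card_eq hσ)] at htwo
  obtain ⟨x, hx, hxw⟩ := Finset.exists_mem_ne htwo w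
  simp only [Finset.mem_sdiff, Equiv.Perm.mem_support, not_not] at hx
  obtain ⟨σ', hσ', hσ'w, hlt⟩ := hσ.exists_agreement_lt hτ.1 hx.2 hx.1 hσw hxw.symm
  exact hlt.not_ge (hagree ⟨hσ', hσ'w⟩ hlt.le)

/-- A missed vertex `v` with a neighbour `w` is related to both ends `w` and `σ w` of a matching
edge. By transitivity distinct missed vertices, not being related, have disjoint such edges. -/
lemma two_mul_ncard_missed_le (hmiss : ∀ v, ∃ σ, IsMaxMatchingPerm G σ ∧ σ v = v)
    {σ : Equiv.Perm V} (hσ : IsMaxMatchingPerm G σ) :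
    2 * {v | v ∈ G.support ∧ σ v = v}.ncard ≤ #σ.support := by
  choose! w hvw using fun v (hv : v ∈ G.support) => hv
  have hcover : ∀ v ∈ {v | v ∈ G.support ∧ σ v = v}, σ (w v) ≠ w v :=
    fun v hv => hσ.apply_ne_of_adj (hvw v hv.1) hv.2
  have hrel : ∀ v ∈ {v | v ∈ G.support ∧ σ v = v}, ∀ b : Bool,
      GallaiRel G v (bif b then w v else σ (w v)) := by
    rintro v hv (_ | _)
    · exact (gallaiRel_of_adj (hvw v hv.1)).trans (gallaiRel_of_adj (hσ.adj (hcover v hv)))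
        (hmiss _)
    · exact gallaiRel_of_adj (hvw v hv.1)
  have hinj : Set.InjOn (fun p : V × Bool => bif p.2 then w p.1 else σ (w p.1))
      ({v | v ∈ G.support ∧ σ v = v} ×ˢ Set.univ) := by
    rintro ⟨v, b⟩ ⟨hv, -⟩ ⟨v', b'⟩ ⟨hv', -⟩ heq
    obtain rfl : v = v' := ((hrel v hv b).trans (by simpa only [heq] using (hrel v' hv' b').symm)
      (hmiss _)).eq_of_apply_eq hσ hv.2 hv'.2
    have := hcover v hv
    cases b <;> cases b' <;> grind
  have hmaps : Set.MapsTo (fun p : V × Bool => bif p.2 then w p.1 else σ (w p.1))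
      ({v | v ∈ G.support ∧ σ v = v} ×ˢ Set.univ) σ.support := by
    rintro ⟨v, _ | _⟩ ⟨hv, -⟩
    · simpa using hcover v hv
    · simpa using hcover v hv
  have hcard := Set.ncard_le_ncard_of_injOn _ hmaps hinj
  rwa [Set.ncard_prod, Set.ncard_univ, Nat.card_eq_fintype_card, Fintype.card_bool, mul_comm,
    Set.ncard_coe_finset] at hcard

lemma two_mul_ncard_support_le (hmiss : ∀ v, ∃ σ, IsMaxMatchingPerm G σ ∧ σ v = v)
    {σ : Equiv.Perm V} (hσ : IsMaxMatchingPerm G σ) :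
    2 * G.support.ncard ≤ 3 * #σ.support := by
  have htwo := two_mul_ncard_missed_le hmiss hσ
  have hsub : G.support ⊆ {v | v ∈ G.support ∧ σ v = v} ∪ σ.support := by
    intro v hv
    by_cases hσv : σ v = v
    · exact .inl ⟨hv, hσv⟩
    · exact .inr (by simpa using hσv)
  have hcard := (Set.ncard_le_ncard hsub).trans (Set.ncard_union_le _ _)
  rw [Set.ncard_coe_finset] at hcard
  omega

/-- `U` is a largest set whose deletion lowers the matching number by at least `#U`. -/
lemma exists_isolate_isMaxMatchingPerm (G : SimpleGraph V) :
    ∃ (U : Finset V) (σ τ : Equiv.Perm V), IsMaxMatchingPerm G σ ∧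
      IsMaxMatchingPerm (isolate G U) τ ∧ #τ.support + 2 * #U ≤ #σ.support ∧
      ∀ v, ∃ ρ, IsMaxMatchingPerm (isolate G U) ρ ∧ ρ v = v := by
  choose τ hτ using fun U : Finset V => exists_isMaxMatchingPerm (isolate G U)
  obtain ⟨U, hU, hUmax⟩ := {U | #(τ U).support + 2 * #U ≤ #(τ ∅).support}.toFinite.exists_maximalFor
    Finset.card _ ⟨∅, by simp⟩
  refine ⟨U, τ ∅, τ U, by simpa only [isolate_empty] using hτ ∅, hτ U, hU, fun v => ?_⟩
  by_cases hv : v ∈ U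
  · exact ⟨τ U, hτ U, (hτ U).apply_eq_of_mem hv⟩
  have hle : isolate G (insert v U) ≤ isolate G U := fun x y h =>
    ⟨h.1, fun hx => h.2.1 (mem_insert_of_mem hx), fun hy => h.2.2 (mem_insert_of_mem hy)⟩
  refine ⟨τ (insert v U), ⟨(hτ _).mono hle, fun ρ hρ => ((hτ U).card_le hρ).trans ?_⟩,
    (hτ _).apply_eq_of_mem (mem_insert_self v U)⟩
  have hcard : #(insert v U) = #U + 1 := card_insert_of_notMem hv
  have hlarge : ¬ #(τ (insert v U)).support + 2 * #(insert v U) ≤ #(τ ∅).support :=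
    fun h => (hUmax h (by omega)).not_gt (by omega)
  have := (hτ U).even_card_support
  have := (hτ (insert v U)).even_card_support
  rw [Set.mem_ofPred_eq] at hU
  grind

end Matching

section Counting

lemma card_interedges_eq_sum {V : Type*} (G : SimpleGraph V) [DecidableRel G.Adj]
    (A B : Finset V) : #(G.interedges A B) = ∑ a ∈ A, #{b ∈ B | G.Adj a b} := by
  simp only [interedges, Rel.interedges, card_filter, sum_product]

variable {V : Type*} [Fintype V] (G : SimpleGraph V) [DecidableRel G.Adj]

lemma ncard_edgeSet_le_isolate (U : Finset V) :
    G.edgeSet.ncard ≤ (isolate G U).edgeSet.ncard + ∑ u ∈ U, G.degree u := by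
  have hcover : G.edgeSet ⊆ (isolate G U).edgeSet ∪ ⋃ u ∈ U, G.incidenceSet u := by
    intro e he
    induction e using Sym2.ind with
    | _ x y =>
      simp only [Set.mem_union, mem_edgeSet, Set.mem_iUnion, mk'_mem_incidenceSet_iff, isolate]
        at he ⊢
      grind
  have hincidence (u : V) : (G.incidenceSet u).ncard = G.degree u := by
    classical
    rw [Set.ncard_eq_toFinset_card', Set.toFinset_card, card_incidenceSet_eq_degree]
  calc G.edgeSet.ncard
      ≤ (isolate G U).edgeSet.ncard + (⋃ u ∈ U, G.incidenceSet u).ncard :=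
        (Set.ncard_le_ncard hcover).trans (Set.ncard_union_le _ _)
    _ ≤ (isolate G U).edgeSet.ncard + ∑ u ∈ U, G.degree u := by
        gcongr
        simpa only [hincidence] using U.set_ncard_biUnion_le G.incidenceSet

lemma ncard_edgeSet_le_ncard_support (hdeg : ∀ v, G.degree v ≤ 2) :
    G.edgeSet.ncard ≤ G.support.ncard := by
  have hsum : ∑ v, G.degree v ≤ ∑ v, if v ∈ G.support then 2 else 0 := by
    refine sum_le_sum fun v _ => ?_
    split_ifs with hv
    · exact hdeg v
    · exact ((G.degree_eq_zero_iff_notMem_support v).2 hv).le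
  rw [sum_degrees_eq_twice_card_edges, ← sum_filter, sum_const, smul_eq_mul, mul_comm _ 2] at hsum
  rw [← coe_edgeFinset, Set.ncard_coe_finset, Set.ncard_eq_toFinset_card',
    ← Set.filter_mem_univ_eq_toFinset]
  omega

/-- The graph formed by the edges of `G` both of whose ends have degree at most two in `G`. -/
def shallow : SimpleGraph V where
  Adj u v := G.Adj u v ∧ G.degree u ≤ 2 ∧ G.degree v ≤ 2
  symm := ⟨fun _ _ h => ⟨h.1.symm, h.2.2, h.2.1⟩⟩
  loopless := ⟨fun _ h => h.1.ne rfl⟩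

instance : DecidableRel (shallow G).Adj :=
  fun u v => inferInstanceAs (Decidable (G.Adj u v ∧ G.degree u ≤ 2 ∧ G.degree v ≤ 2))

lemma edgeSet_shallow :
    (shallow G).edgeSet = {e | e ∈ G.edgeSet ∧ ∀ v ∈ e, G.degree v ≤ 2} := by
  ext e
  induction e using Sym2.ind with
  | _ x y => simp [shallow]

lemma shallow_le : shallow G ≤ G := fun _ _ h => h.1

lemma degree_shallow_eq_zero {v : V} (hv : 2 < G.degree v) : (shallow G).degree v = 0 :=
  (degree_eq_zero_iff_notMem_support _ v).2 fun ⟨_, h⟩ => hv.not_ge h.2.1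

lemma degree_shallow_le_two (v : V) : (shallow G).degree v ≤ 2 := by
  rcases le_or_gt (G.degree v) 2 with hv | hv
  · exact (degree_le_of_le (shallow_le G)).trans hv
  · exact (degree_shallow_eq_zero G hv).trans_le zero_le_two

lemma ncard_edgeSet_shallow_le (U : Finset V) :
    (shallow G).edgeSet.ncard ≤ ((isolate G U).support ∩ {v | G.degree v ≤ 2}).ncard +
      ∑ u ∈ U, (shallow G).degree u := by
  classical
  refine (ncard_edgeSet_le_isolate (shallow G) U).trans (Nat.add_le_add_right ?_ _)
  have hdeg (v : V) : (isolate (shallow G) U).degree v ≤ 2 :=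
    (degree_le_of_le (isolate_le (shallow G) U)).trans (degree_shallow_le_two G v)
  refine (ncard_edgeSet_le_ncard_support _ hdeg).trans (Set.ncard_le_ncard ?_)
  exact fun v ⟨w, h⟩ => ⟨⟨w, h.1.1, h.2⟩, h.1.2.1⟩

section

variable [DecidableEq V]

/-- The vertices outside `U` of degree at least three that are isolated once `U` is deleted. -/
def enclosed (U : Finset V) : Finset V :=
  {v | 3 ≤ G.degree v ∧ v ∉ U ∧ ∀ w, G.Adj v w → w ∈ U}

lemma ncard_high_le (U : Finset V) :
    {v | 3 ≤ G.degree v}.ncard ≤ #{u ∈ U | 3 ≤ G.degree u} +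
      ((isolate G U).support \ {v | G.degree v ≤ 2}).ncard + #(enclosed G U) := by
  have hcover : {v | 3 ≤ G.degree v} ⊆ ({u ∈ U | 3 ≤ G.degree u} : Finset V) ∪
      ((isolate G U).support \ {v | G.degree v ≤ 2}) ∪ enclosed G U := by
    intro v hv
    simp only [Set.mem_union, mem_coe, enclosed, mem_filter, Set.mem_ofPred_eq, Set.mem_sdiff,
      mem_support, isolate] at hv ⊢
    grind
  refine (Set.ncard_le_ncard hcover).trans ((Set.ncard_union_le _ _).trans ?_)
  rw [Set.ncard_coe_finset]
  refine Nat.add_le_add_right ((Set.ncard_union_le _ _).trans_eq ?_) _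
  rw [Set.ncard_coe_finset]

lemma three_mul_card_enclosed_le (U : Finset V) :
    3 * #(enclosed G U) ≤ #(G.interedges U (enclosed G U)) := by
  have := G.symm
  rw [interedges, Rel.card_interedges_comm, ← interedges, card_interedges_eq_sum, mul_comm,
    ← smul_eq_mul]
  refine card_nsmul_le_sum _ _ _ fun v hv => ?_
  simp only [enclosed, mem_filter_univ] at hv
  refine hv.1.trans (card_le_card fun w hw => ?_)
  rw [mem_neighborFinset] at hw
  exact mem_filter.2 ⟨hv.2.2 w hw, hw⟩

lemma degree_shallow_add_card_enclosed_le (U : Finset V) {u : V} (hu : G.degree u ≤ 2) :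
    (shallow G).degree u + #{v ∈ enclosed G U | G.Adj u v} ≤ 2 := by
  refine le_trans ?_ hu
  rw [← card_neighborFinset_eq_degree, ← card_neighborFinset_eq_degree, ← card_union_of_disjoint]
  · refine card_le_card fun v hv => ?_
    simp only [mem_union, mem_neighborFinset, mem_filter] at hv ⊢
    exact hv.elim And.left And.right
  · refine disjoint_left.2 fun v hv hv' => ?_
    rw [mem_neighborFinset] at hv
    have hhigh := (mem_filter.1 (mem_filter.1 hv').1).2.1
    exact hv.2.2.not_gt hhigh

lemma sum_degree_shallow_add_card_le
    (hsparse : ∀ A B : Finset V, Disjoint A B → #(G.interedges A B) ≤ 2 * (#A + #B))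
    (U : Finset V) :
    ∑ u ∈ U, (shallow G).degree u + #{u ∈ U | 3 ≤ G.degree u} + #(enclosed G U) ≤ 3 * #U := by
  have hdisj : Disjoint {u ∈ U | 3 ≤ G.degree u} (enclosed G U) := by
    refine disjoint_left.2 fun v hv hv' => ?_
    exact (mem_filter.1 hv').2.2.1 (mem_filter.1 hv).1
  have hedges := three_mul_card_enclosed_le G U
  have hhigh := hsparse _ _ hdisj
  have hlow : ∑ u ∈ U with ¬ 3 ≤ G.degree u,
      ((shallow G).degree u + #{v ∈ enclosed G U | G.Adj u v}) ≤
        #{u ∈ U | ¬ 3 ≤ G.degree u} • 2 :=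
    sum_le_card_nsmul _ _ _ fun u hu =>
      degree_shallow_add_card_enclosed_le G U (by have := (mem_filter.1 hu).2; omega)
  have hzero : ∑ u ∈ U with 3 ≤ G.degree u, (shallow G).degree u = 0 :=
    sum_eq_zero fun u hu => degree_shallow_eq_zero G (mem_filter.1 hu).2
  have hcard := card_filter_add_card_filter_not (s := U) (3 ≤ G.degree ·)
  rw [card_interedges_eq_sum, ← sum_filter_add_sum_filter_not U (3 ≤ G.degree ·)] at hedges
  rw [card_interedges_eq_sum] at hhigh
  rw [sum_add_distrib, smul_eq_mul] at hlow
  rw [← sum_filter_add_sum_filter_not U (3 ≤ G.degree ·)]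
  omega

end

lemma ncard_shallow_add_ncard_high_le
    (hsparse : ∀ A B : Finset V, Disjoint A B → #(G.interedges A B) ≤ 2 * (#A + #B))
    (U : Finset V) :
    (shallow G).edgeSet.ncard + {v | 3 ≤ G.degree v}.ncard ≤
      3 * #U + (isolate G U).support.ncard := by
  classical
  have hshallow := ncard_edgeSet_shallow_le G U
  have hhigh := ncard_high_le G U
  have hdeleted := sum_degree_shallow_add_card_le G hsparse U
  have hsplit := Set.ncard_inter_add_ncard_sdiff_eq_ncard (isolate G U).support
    {v | G.degree v ≤ 2}
  omega

end Counting

end PlanarMatching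

open PlanarMatching in
theorem shallow_add_high_le_three_matching_general {V : Type*} [Fintype V]
    (G : SimpleGraph V) [DecidableRel G.Adj]
    (hsparse : ∀ A B : Finset V, Disjoint A B → #(G.interedges A B) ≤ 2 * (#A + #B)) :
    ∃ M : G.Subgraph, M.IsMatching ∧
      ({e : Sym2 V | e ∈ G.edgeSet ∧ ∀ v ∈ e, G.degree v ≤ 2} : Set (Sym2 V)).ncard +
        ({v : V | 3 ≤ G.degree v} : Set V).ncard ≤ 3 * M.edgeSet.ncard := by
  classical
  obtain ⟨U, σ, τ, hσ, hτ, hcard, hmiss⟩ := exists_isolate_isMaxMatchingPerm G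
  refine ⟨hσ.toSubgraph, hσ.isMatching_toSubgraph, ?_⟩
  have hcount := ncard_shallow_add_ncard_high_le G hsparse U
  have hsupport := two_mul_ncard_support_le hmiss hτ
  have hedges := hσ.two_mul_ncard_edgeSet_toSubgraph
  rw [← edgeSet_shallow]
  omega

/-- For a planar graph, if `s` is the number of edges both of whose endpoints
have degree at most 2 and `h` is the number of vertices of degree at least 3,
then `s + h ≤ 3ν(G)`. -/
theorem shallow_add_high_le_three_matching {V : Type*} [Fintype V]
    (G : SimpleGraph V) [DecidableRel G.Adj] (hplanar : G.IsPlanar) :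
    ∃ M : G.Subgraph, M.IsMatching ∧
      ({e : Sym2 V | e ∈ G.edgeSet ∧ ∀ v ∈ e, G.degree v ≤ 2} : Set (Sym2 V)).ncard +
        ({v : V | 3 ≤ G.degree v} : Set V).ncard ≤ 3 * M.edgeSet.ncard :=
  shallow_add_high_le_three_matching_general G fun _ _ hAB =>
    PlanarMatching.card_interedges_le_of_isPlanar hplanar hAB
end

section
/- Every planar graph on n vertices with minimum degree at least 3 has a matching of size at least n/3. -/
/-!
A planar graph has no `K₃,₃` minor. In a drawing of `K₃,₃` with sides `p` and `q`, compare for two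
vertices `p i`, `p k` the increments of the logarithms of `z - p k` and `z - p i` along the edges
from `p i` and from `p k`. Twice the difference is of the form `F i - F k`, by evaluating a
continuous logarithm of `z - w` at the corners of each product of two disjoint edges, so the
differences sum to `0` over the cycle `0 → 1 → 2 → 0`. Yet the exponential of that sum is
`(-1) ^ 3`.

In a graph without a `K₃,₃` minor, at most `2 * c - 2` vertices can be attached to three of `c`
disjoint connected sets. Merging two of the sets through a vertex attached to both shows that in a
minimal counterexample any two sets with a common attached vertex have three. The vertices attached
to a set of smallest degree, which is at most `5`, then form a small multigraph of minimum degree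
`3`, in which a `K₃,₃` minor is visible.

By the Tutte–Berge formula some set `S` witnesses the maximum matching size. Odd components of
`G - S` other than isolated vertices have at least `3` vertices, and at most `2 * |S|` isolated
vertices of `G - S` have degree at least `3` in `G`, which gives `|{v | 3 ≤ deg v}| ≤ 3 * |M|`.
-/

namespace PlanarMatching

section LogIncrement

open Complex

lemma exists_continuous_log {X : Type*} [TopologicalSpace X] [SimplyConnectedSpace X]
    [LocallyPathConnectedSpace X] {f : X → ℂ} (hf : Continuous f) (hne : ∀ x, f x ≠ 0) :
    ∃ L : X → ℂ, Continuous L ∧ ∀ x, exp (L x) = f x := by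
  obtain ⟨x₀⟩ : Nonempty X := inferInstance
  obtain ⟨L, ⟨-, hL⟩, -⟩ :=
    isCoveringMapOn_exp.existsUnique_continuousMap_lifts ⟨f, hf⟩ (exp_log (hne x₀)) hne
  exact ⟨L, L.continuous, congrFun hL⟩

lemma log_increment_unique {L L' : ℝ → ℂ} (hL : Continuous L) (hL' : Continuous L')
    (hexp : ∀ t, exp (L t) = exp (L' t)) (s t : ℝ) : L t - L s = L' t - L' s := by
  have hshift : exp (L s - L' s) = 1 := by rw [exp_sub, hexp s, div_self (exp_ne_zero _)]
  have hunique := (isCoveringMapOn_exp.existsUnique_continuousMap_lifts (a₀ := s) (e₀ := L s)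
    ⟨fun t => exp (L t), by fun_prop⟩ rfl fun t => exp_ne_zero (L t)).unique
    (y₁ := ⟨L, hL⟩) (y₂ := ⟨fun t => L' t + (L s - L' s), by fun_prop⟩)
    ⟨rfl, rfl⟩ ⟨by simp, by ext t; simp [exp_add, hshift, hexp t]⟩
  have ht : L t = L' t + (L s - L' s) := DFunLike.congr_fun hunique t
  rw [ht]
  ring

open Classical in
/-- The increment `L 1 - L 0` of a continuous logarithm `L` along a curve `f : ℝ → ℂ`, of which only
the part over `[0, 1]` matters; its imaginary part is the angle swept around the origin. It is `0`
by convention if `f` has no continuous logarithm. -/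
noncomputable def logIncrement (f : ℝ → ℂ) : ℂ :=
  if h : ∃ L : ℝ → ℂ, Continuous L ∧ ∀ t, exp (L t) = f t then h.choose 1 - h.choose 0 else 0

lemma logIncrement_eq {f L : ℝ → ℂ} (hL : Continuous L) (hexp : ∀ t, exp (L t) = f t) :
    logIncrement f = L 1 - L 0 := by
  have hex : ∃ L : ℝ → ℂ, Continuous L ∧ ∀ t, exp (L t) = f t := ⟨L, hL, hexp⟩
  rw [logIncrement, dif_pos hex]
  exact log_increment_unique hex.choose_spec.1 hL
    (fun t => (hex.choose_spec.2 t).trans (hexp t).symm) 0 1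

lemma exp_logIncrement {f : ℝ → ℂ} (hf : Continuous f) (hne : ∀ t, f t ≠ 0) :
    exp (logIncrement f) = f 1 / f 0 := by
  obtain ⟨L, hL, hexp⟩ := exists_continuous_log hf hne
  rw [logIncrement_eq hL hexp, exp_sub, hexp, hexp]

lemma logIncrement_neg {f : ℝ → ℂ} (hf : Continuous f) (hne : ∀ t, f t ≠ 0) :
    logIncrement (fun t => -f t) = logIncrement f := by
  obtain ⟨L, hL, hexp⟩ := exists_continuous_log hf hne
  rw [logIncrement_eq hL hexp, logIncrement_eq (L := fun t => L t + Real.pi * I) (by fun_prop)]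
  · ring
  · intro t
    simp [exp_add, hexp]

-- A continuous logarithm of `f s - g t` on the plane makes both sides a sum over its four corners.
lemma logIncrement_sub_comm {f g : ℝ → ℂ} (hf : Continuous f) (hg : Continuous g)
    (hne : ∀ s t, f s ≠ g t) :
    logIncrement (fun s => f s - g 0) - logIncrement (fun s => f s - g 1) =
      logIncrement (fun t => g t - f 0) - logIncrement (fun t => g t - f 1) := by
  obtain ⟨L, hL, hexp⟩ := exists_continuous_log (X := ℝ × ℝ) (f := fun z => f z.1 - g z.2)
    (by fun_prop) (fun z => sub_ne_zero.2 (hne _ _))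
  have along_f (t : ℝ) : logIncrement (fun s => f s - g t) = L (1, t) - L (0, t) :=
    logIncrement_eq (L := fun s => L (s, t)) (by fun_prop) fun s => hexp (s, t)
  have along_g (s : ℝ) : logIncrement (fun t => g t - f s) = L (s, 1) - L (s, 0) := by
    rw [← logIncrement_eq (f := fun t => f s - g t) (L := fun t => L (s, t)) (by fun_prop)
        fun t => hexp (s, t),
      ← logIncrement_neg (by fun_prop) fun t => sub_ne_zero.2 (hne s t)]
    simp only [neg_sub]
  rw [along_f, along_f, along_g, along_g]
  ring

end LogIncrement

section TopologicalK33

open Complex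

/-- A drawing of `K₃,₃` in the complex plane: `γ i j` runs from `p i` at time `0` to `q j` at time
`1`, and curves without a common end are disjoint. Curves with a common end may cross. -/
structure IsK33Drawing (p q : Fin 3 → ℂ) (γ : Fin 3 → Fin 3 → ℝ → ℂ) : Prop where
  continuous : ∀ i j, Continuous (γ i j)
  apply_zero : ∀ i j, γ i j 0 = p i
  apply_one : ∀ i j, γ i j 1 = q j
  disjoint : ∀ ⦃i j k l⦄, i ≠ k → j ≠ l → ∀ s t, γ i j s ≠ γ k l t

namespace IsK33Drawing

variable {p q : Fin 3 → ℂ} {γ : Fin 3 → Fin 3 → ℝ → ℂ}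

lemma apply_ne_left (h : IsK33Drawing p q γ) {i k : Fin 3} (hik : i ≠ k) (j : Fin 3) (s : ℝ) :
    γ i j s ≠ p k := by
  obtain ⟨l, hl⟩ := exists_ne j
  rw [← h.apply_zero k l]
  exact h.disjoint hik hl.symm s 0

lemma right_ne_left (h : IsK33Drawing p q γ) (i j : Fin 3) : q j ≠ p i := by
  obtain ⟨k, hk⟩ := exists_ne i
  rw [← h.apply_one k j]
  exact h.apply_ne_left hk j 1

lemma two_mul_sum_logIncrement (h : IsK33Drawing p q γ) {i k : Fin 3} (hik : i ≠ k) :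
    2 * ∑ j, (logIncrement (fun s => γ i j s - p k) - logIncrement (fun s => γ k j s - p i)) =
      ∑ j, (logIncrement (fun s => γ i j s - q (j + 1)) +
        logIncrement (fun s => γ i j s - q (j + 2))) -
      ∑ j, (logIncrement (fun s => γ k j s - q (j + 1)) +
        logIncrement (fun s => γ k j s - q (j + 2))) := by
  have relation {j l : Fin 3} (hjl : j ≠ l) :
      logIncrement (fun s => γ i j s - p k) - logIncrement (fun s => γ i j s - q l) =
        logIncrement (fun s => γ k l s - p i) - logIncrement (fun s => γ k l s - q j) := by
    simpa only [h.apply_zero, h.apply_one] using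
      logIncrement_sub_comm (h.continuous i j) (h.continuous k l) (h.disjoint hik hjl)
  have h01 := relation (j := 0) (l := 1) (by decide)
  have h02 := relation (j := 0) (l := 2) (by decide)
  have h10 := relation (j := 1) (l := 0) (by decide)
  have h12 := relation (j := 1) (l := 2) (by decide)
  have h20 := relation (j := 2) (l := 0) (by decide)
  have h21 := relation (j := 2) (l := 1) (by decide)
  simp only [Fin.sum_univ_three, Fin.reduceAdd]
  linear_combination h01 + h02 + h10 + h12 + h20 + h21

lemma exp_sum_logIncrement (h : IsK33Drawing p q γ) {i k : Fin 3} (hik : i ≠ k) :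
    exp (∑ j, (logIncrement (fun s => γ i j s - p k) - logIncrement (fun s => γ k j s - p i))) =
      -((∏ j, (q j - p k)) / ∏ j, (q j - p i)) := by
  have exp_increment {i k : Fin 3} (hik : i ≠ k) (j : Fin 3) :
      exp (logIncrement fun s => γ i j s - p k) = (q j - p k) / (p i - p k) := by
    have hγ := h.continuous i j
    rw [exp_logIncrement (by fun_prop) fun s => sub_ne_zero.2 (h.apply_ne_left hik j s),
      h.apply_zero, h.apply_one]
  have hp : p i - p k ≠ 0 := by
    rw [← h.apply_zero i 0]
    exact sub_ne_zero.2 (h.apply_ne_left hik 0 0)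
  have factor (j : Fin 3) : exp (logIncrement (fun s => γ i j s - p k) -
      logIncrement (fun s => γ k j s - p i)) = -((q j - p k) / (q j - p i)) := by
    have hq := sub_ne_zero.2 (h.right_ne_left i j)
    rw [exp_sub, exp_increment hik, exp_increment hik.symm, ← neg_sub (p i) (p k)]
    field_simp
  simp only [exp_sum, factor, Finset.prod_neg, Finset.card_univ, Fintype.card_fin,
    Finset.prod_div_distrib]
  ring

theorem elim (h : IsK33Drawing p q γ) : False := by
  set turn : Fin 3 → Fin 3 → ℂ := fun i k =>
    ∑ j, (logIncrement (fun s => γ i j s - p k) - logIncrement (fun s => γ k j s - p i))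
  have turn_sum : turn 0 1 + turn 1 2 + turn 2 0 = 0 := by
    linear_combination (h.two_mul_sum_logIncrement (i := 0) (k := 1) (by decide) +
      h.two_mul_sum_logIncrement (i := 1) (k := 2) (by decide) +
      h.two_mul_sum_logIncrement (i := 2) (k := 0) (by decide)) / 2
  have hne (i : Fin 3) : ∏ j, (q j - p i) ≠ 0 :=
    Finset.prod_ne_zero_iff.2 fun j _ => sub_ne_zero.2 (h.right_ne_left i j)
  have exp_turn_sum : exp (turn 0 1 + turn 1 2 + turn 2 0) = -1 := by
    rw [exp_add, exp_add, h.exp_sum_logIncrement (by decide), h.exp_sum_logIncrement (by decide),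
      h.exp_sum_logIncrement (by decide)]
    have := hne 0
    have := hne 1
    have := hne 2
    field_simp
  rw [turn_sum, exp_zero] at exp_turn_sum
  norm_num at exp_turn_sum

end IsK33Drawing

end TopologicalK33

section Minor

open Function

variable {V W ι κ : Type*}

/-- The sets `branch w` are the branch sets of a minor of `G` isomorphic to `H`: contracting each of
them to a point yields a graph containing `H`. -/
structure IsMinorModel (G : SimpleGraph V) (H : SimpleGraph W) (branch : W → Set V) : Prop where
  connected : ∀ w, (G.induce (branch w)).Connected
  disjoint : Pairwise (Disjoint on branch)
  exists_adj : ∀ ⦃a b⦄, H.Adj a b → ∃ x ∈ branch a, ∃ y ∈ branch b, G.Adj x y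

/-- `H` is a minor of `G`, expressed by the existence of branch sets. -/
def HasMinor (G : SimpleGraph V) (H : SimpleGraph W) : Prop :=
  ∃ branch : W → Set V, IsMinorModel G H branch

lemma hasMinor_completeBipartiteGraph {G : SimpleGraph V} {P : ι → Set V} {Q : κ → Set V}
    (hP : ∀ i, (G.induce (P i)).Connected) (hQ : ∀ j, (G.induce (Q j)).Connected)
    (hPP : Pairwise (Disjoint on P)) (hQQ : Pairwise (Disjoint on Q))
    (hPQ : ∀ i j, Disjoint (P i) (Q j))
    (hadj : ∀ i j, ∃ x ∈ P i, ∃ y ∈ Q j, G.Adj x y) :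
    HasMinor G (completeBipartiteGraph ι κ) := by
  refine ⟨Sum.elim P Q, ?_, ?_, ?_⟩
  · rintro (i | j)
    exacts [hP i, hQ j]
  · rintro (i | j) (k | l) hne
    · exact hPP (ne_of_apply_ne Sum.inl hne)
    · exact hPQ i l
    · exact (hPQ k j).symm
    · exact hQQ (ne_of_apply_ne Sum.inr hne)
  · rintro (i | j) (k | l) h
    · simp at h
    · exact hadj i l
    · obtain ⟨x, hx, y, hy, hxy⟩ := hadj k j
      exact ⟨y, hy, x, hx, hxy.symm⟩
    · simp at h

lemma connected_induce_singleton (G : SimpleGraph V) (v : V) : (G.induce {v}).Connected :=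
  SimpleGraph.Connected.of_subsingleton

end Minor

section Drawing

variable {V E : Type*} [TopologicalSpace E] {G : SimpleGraph V} {pos : V → E}
  {γ : ∀ ⦃u v : V⦄, G.Adj u v → unitInterval → E}

/-- A drawing of `G` in the space `E` without crossings. Both orientations of an edge have their own
curve, and these two curves need not be related. -/
structure IsDrawing (G : SimpleGraph V) (pos : V → E)
    (γ : ∀ ⦃u v : V⦄, G.Adj u v → unitInterval → E) : Prop where
  pos_injective : Function.Injective pos
  continuous : ∀ ⦃u v⦄ (e : G.Adj u v), Continuous (γ e)
  apply_zero : ∀ ⦃u v⦄ (e : G.Adj u v), γ e 0 = pos u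
  apply_one : ∀ ⦃u v⦄ (e : G.Adj u v), γ e 1 = pos v
  interior_ne_pos : ∀ ⦃u v⦄ (e : G.Adj u v) (t : unitInterval), t ≠ 0 → t ≠ 1 →
    ∀ w, γ e t ≠ pos w
  eq_zero_or_one_of_eq : ∀ ⦃u v u' v'⦄ (e : G.Adj u v) (e' : G.Adj u' v') (t t' : unitInterval),
    s(u, v) ≠ s(u', v') → γ e t = γ e' t' → t = 0 ∨ t = 1

/-- The part of a drawing occupied by the subgraph induced on `U`. -/
def drawnPart (pos : V → E) (γ : ∀ ⦃u v : V⦄, G.Adj u v → unitInterval → E) (U : Set V) : Set E :=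
  pos '' U ∪ {z | ∃ u ∈ U, ∃ v ∈ U, ∃ e : G.Adj u v, z ∈ Set.range (γ e)}

namespace IsDrawing

lemma eq_or_eq_of_apply_eq_pos (h : IsDrawing G pos γ) {u v w : V} {e : G.Adj u v}
    {t : unitInterval} (heq : γ e t = pos w) : w = u ∨ w = v := by
  by_cases ht₀ : t = 0
  · rw [ht₀, h.apply_zero] at heq
    exact .inl (h.pos_injective heq).symm
  by_cases ht₁ : t = 1
  · rw [ht₁, h.apply_one] at heq
    exact .inr (h.pos_injective heq).symm
  exact absurd heq (h.interior_ne_pos e t ht₀ ht₁ w)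

lemma exists_common_endpoint (h : IsDrawing G pos γ) {u v u' v' : V} {e : G.Adj u v}
    {e' : G.Adj u' v'} {t t' : unitInterval} (heq : γ e t = γ e' t') :
    ∃ w, (w = u ∨ w = v) ∧ (w = u' ∨ w = v') := by
  by_cases hs : s(u, v) = s(u', v')
  · exact ⟨u, .inl rfl, Sym2.mem_iff.1 (hs ▸ Sym2.mem_mk_left u v)⟩
  rcases h.eq_zero_or_one_of_eq e e' t t' hs heq with rfl | rfl
  · rw [h.apply_zero] at heq
    exact ⟨u, .inl rfl, h.eq_or_eq_of_apply_eq_pos heq.symm⟩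
  · rw [h.apply_one] at heq
    exact ⟨v, .inr rfl, h.eq_or_eq_of_apply_eq_pos heq.symm⟩

lemma disjoint_drawnPart (h : IsDrawing G pos γ) {U U' : Set V} (hd : Disjoint U U') :
    Disjoint (drawnPart pos γ U) (drawnPart pos γ U') := by
  have hne {x : V} (hx : x ∈ U) : x ∉ U' := Set.disjoint_left.1 hd hx
  rw [Set.disjoint_left]
  rintro z (⟨u, hu, rfl⟩ | ⟨u, hu, v, hv, e, t, rfl⟩)
    (⟨u', hu', heq⟩ | ⟨u', hu', v', hv', e', t', heq⟩)
  · exact hne hu (h.pos_injective heq ▸ hu')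
  · rcases h.eq_or_eq_of_apply_eq_pos heq with rfl | rfl
    exacts [hne hu hu', hne hu hv']
  · rcases h.eq_or_eq_of_apply_eq_pos heq.symm with rfl | rfl
    exacts [hne hu hu', hne hv hu']
  · obtain ⟨w, rfl | rfl, rfl | rfl⟩ := h.exists_common_endpoint heq.symm
    exacts [hne hu hu', hne hu hv', hne hv hu', hne hv hv']

lemma joinedIn_drawnPart (h : IsDrawing G pos γ) {U : Set V} (hU : (G.induce U).Preconnected)
    {u v : V} (hu : u ∈ U) (hv : v ∈ U) : JoinedIn (drawnPart pos γ U) (pos u) (pos v) := by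
  suffices hwalk : ∀ a b : U, (G.induce U).Walk a b →
      JoinedIn (drawnPart pos γ U) (pos a) (pos b) by
    obtain ⟨walk⟩ := hU ⟨u, hu⟩ ⟨v, hv⟩
    exact hwalk _ _ walk
  intro a b walk
  induction walk with
  | nil => exact JoinedIn.refl (.inl ⟨_, Subtype.property _, rfl⟩)
  | @cons a b _ hab _ ih =>
    have e : G.Adj a b := hab
    let arc : Path (pos a) (pos b) := ⟨⟨γ e, h.continuous e⟩, h.apply_zero e, h.apply_one e⟩
    exact JoinedIn.trans ⟨arc, fun t => .inr ⟨a, a.2, b, b.2, e, t, rfl⟩⟩ ih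

lemma exists_disjoint_paths_of_hasMinor (h : IsDrawing G pos γ) {ι κ : Type*}
    (hG : HasMinor G (completeBipartiteGraph ι κ)) :
    ∃ (p : ι → E) (q : κ → E) (P : ∀ i j, Path (p i) (q j)),
      ∀ ⦃i j k l⦄, i ≠ k → j ≠ l → Disjoint (Set.range (P i j)) (Set.range (P k l)) := by
  obtain ⟨branch, model⟩ := hG
  choose v hv using fun w => Set.nonempty_coe_sort.1 (model.connected w).nonempty
  have joined (i : ι) (j : κ) : JoinedIn (drawnPart pos γ (branch (.inl i) ∪ branch (.inr j)))
      (pos (v (.inl i))) (pos (v (.inr j))) := by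
    obtain ⟨x, hx, y, hy, hxy⟩ := model.exists_adj (a := .inl i) (b := .inr j) (by simp)
    have hconn := SimpleGraph.connected_induce_union (model.connected _).preconnected
      (model.connected _).preconnected hx hy hxy
    exact h.joinedIn_drawnPart hconn.preconnected (.inl (hv _)) (.inr (hv _))
  choose P hP using joined
  refine ⟨_, _, P, fun i j k l hik hjl => ?_⟩
  refine (h.disjoint_drawnPart ?_).mono (Set.range_subset_iff.2 (hP i j))
    (Set.range_subset_iff.2 (hP k l))
  simp only [Set.disjoint_union_left, Set.disjoint_union_right]
  exact ⟨⟨model.disjoint (by simpa using hik), model.disjoint (by simp)⟩,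
    model.disjoint (by simp), model.disjoint (by simpa using hjl)⟩

end IsDrawing

theorem not_hasMinor_completeBipartiteGraph_of_isPlanar (hG : G.IsPlanar) :
    ¬ HasMinor G (completeBipartiteGraph (Fin 3) (Fin 3)) := by
  intro hminor
  obtain ⟨pos, γ, hpos, harc, -, hinterior, hcross⟩ := hG
  have drawing : IsDrawing G pos γ :=
    ⟨hpos, fun _ _ e => (harc e).1, fun _ _ e => (harc e).2.2.1, fun _ _ e => (harc e).2.2.2,
      hinterior, hcross⟩
  obtain ⟨p, q, P, hP⟩ := drawing.exists_disjoint_paths_of_hasMinor hminor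
  let toComplex := Complex.equivRealProdCLM.symm
  refine IsK33Drawing.elim (p := toComplex ∘ p) (q := toComplex ∘ q)
    (γ := fun i j t => toComplex ((P i j).extend t)) ⟨fun i j => ?_, ?_, ?_, ?_⟩
  · exact toComplex.continuous.comp (P i j).continuous_extend
  · simp
  · simp
  · intro i j k l hik hjl s t heq
    have mem_range (i j : Fin 3) (s : ℝ) : (P i j).extend s ∈ Set.range (P i j) :=
      (P i j).extend_range ▸ Set.mem_range_self s
    exact Set.disjoint_left.1 (hP hik hjl) (mem_range i j s)
      (toComplex.injective heq ▸ mem_range k l t)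

end Drawing

section Multigraph

variable {α β : Type*} [DecidableEq β] {D : Finset α} {M : α → Finset β}

lemma three_mul_card_biUnion_le (hM : ∀ a ∈ D, (M a).card = 2)
    (hdeg : ∀ a ∈ D, ∀ y ∈ M a, 3 ≤ {b ∈ D | y ∈ M b}.card) :
    3 * (D.biUnion M).card ≤ 2 * D.card := by
  rw [mul_comm 3, mul_comm 2]
  refine Finset.card_mul_le_card_mul (fun y a => y ∈ M a) (fun y hy => ?_) fun a ha => ?_
  · obtain ⟨a, ha, hya⟩ := Finset.mem_biUnion.1 hy
    exact hdeg a ha y hya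
  · rw [← hM a ha]
    exact Finset.card_le_card fun y hy => (Finset.mem_filter.1 hy).2

lemma exists_ne_map_eq_of_card_le_five (hM : ∀ a ∈ D, (M a).card = 2)
    (hdeg : ∀ a ∈ D, ∀ y ∈ M a, 3 ≤ {b ∈ D | y ∈ M b}.card) (hne : D.Nonempty)
    (hD : D.card ≤ 5) : ∃ v ∈ D, ∃ w ∈ D, v ≠ w ∧ M v = M w := by
  obtain ⟨a, ha⟩ := hne
  obtain ⟨y, hy⟩ := Finset.card_pos.1 (hM a ha ▸ two_pos)
  have two_le : 2 ≤ (D.biUnion M).card :=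
    hM a ha ▸ Finset.card_le_card (Finset.subset_biUnion_of_mem M ha)
  have three_le : 3 ≤ D.card := (hdeg a ha y hy).trans (Finset.card_filter_le _ _)
  have count := three_mul_card_biUnion_le hM hdeg
  refine Finset.exists_ne_map_eq_of_card_lt_of_maps_to (t := (D.biUnion M).powersetCard 2) ?_
    fun b hb => Finset.mem_powersetCard.2 ⟨Finset.subset_biUnion_of_mem M hb, hM b hb⟩
  rw [Finset.card_powersetCard]
  obtain hP | hP : (D.biUnion M).card = 2 ∨ (D.biUnion M).card = 3 := by omega
  · rw [hP, Nat.choose_self]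
    omega
  · rw [hP, Nat.choose_succ_self_right]
    omega

lemma exists_parallel_or_triangle (hM : ∀ a ∈ D, (M a).card = 2)
    (hdeg : ∀ a ∈ D, ∀ y ∈ M a, 3 ≤ {b ∈ D | y ∈ M b}.card) (hne : D.Nonempty)
    (hD : D.card ≤ 5) :
    ∃ v ∈ D, ∃ w ∈ D, v ≠ w ∧ M v = M w ∧
      ((∃ u ∈ D, u ≠ v ∧ u ≠ w ∧ M u = M v) ∨
        ∃ u ∈ D, ∃ u' ∈ D, ∃ r ∈ M u ∩ M u', r ∉ M v ∧ M v ⊆ M u ∪ M u') := by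
  classical
  obtain ⟨v, hv, w, hw, hvw, heq⟩ := exists_ne_map_eq_of_card_le_five hM hdeg hne hD
  refine ⟨v, hv, w, hw, hvw, heq, or_iff_not_imp_left.2 fun hthird => ?_⟩
  have exists_exit {y : β} (hy : y ∈ M v) : ∃ u ∈ D, y ∈ M u ∧ ∃ r ∈ M u, r ∉ M v := by
    obtain ⟨u, hu, hu'⟩ := Finset.exists_mem_notMem_of_card_lt_card
      (Finset.card_le_two.trans_lt (hdeg v hv y hy) : Finset.card {v, w} < _)
    simp only [Finset.mem_filter, Finset.mem_insert, Finset.mem_singleton, not_or] at hu hu'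
    refine ⟨u, hu.1, hu.2, Finset.not_subset.1 fun hsub => hthird ⟨u, hu.1, hu'.1, hu'.2, ?_⟩⟩
    exact Finset.eq_of_subset_of_card_le hsub (by rw [hM u hu.1, hM v hv])
  have exit_unique : (D.biUnion M \ M v).card ≤ 1 := by
    have := three_mul_card_biUnion_le hM hdeg
    rw [Finset.card_sdiff_of_subset (Finset.subset_biUnion_of_mem M hv), hM v hv]
    omega
  obtain ⟨p, q, -, hpq⟩ := Finset.card_eq_two.1 (hM v hv)
  obtain ⟨u, hu, hpu, r, hru, hr⟩ := exists_exit (y := p) (by simp [hpq])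
  obtain ⟨u', hu', hqu', r', hru', hr'⟩ := exists_exit (y := q) (by simp [hpq])
  obtain rfl : r = r' := Finset.card_le_one.1 exit_unique r
    (Finset.mem_sdiff.2 ⟨Finset.mem_biUnion.2 ⟨u, hu, hru⟩, hr⟩) r'
    (Finset.mem_sdiff.2 ⟨Finset.mem_biUnion.2 ⟨u', hu', hru'⟩, hr'⟩)
  refine ⟨u, hu, u', hu', r, Finset.mem_inter.2 ⟨hru, hru'⟩, hr, ?_⟩
  rw [hpq, Finset.insert_subset_iff, Finset.singleton_subset_iff]
  exact ⟨Finset.mem_union_left _ hpu, Finset.mem_union_right _ hqu'⟩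

end Multigraph

section Tripod

open Function

variable {V ι : Type*} {G : SimpleGraph V} {B : ι → Set V} {T : Finset ι} {R : Set V}

/-- `R` is connected and, for each `i ∈ T`, disjoint from `B i` and joined to it by an edge: it can
serve as the branch set of a vertex adjacent to all the `B i` with `i ∈ T`. -/
structure IsHub (G : SimpleGraph V) (B : ι → Set V) (T : Finset ι) (R : Set V) : Prop where
  connected : (G.induce R).Connected
  disjoint : ∀ i ∈ T, Disjoint (B i) R
  exists_adj : ∀ i ∈ T, ∃ x ∈ B i, ∃ y ∈ R, G.Adj x y

lemma hasMinor_of_isHub {n : ℕ} (hT : T.card = n) (hconn : ∀ i ∈ T, (G.induce (B i)).Connected)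
    (hdisj : (T : Set ι).PairwiseDisjoint B) {κ : Type*} {R : κ → Set V}
    (hub : ∀ k, IsHub G B T (R k)) (hR : Pairwise (Disjoint on R)) :
    HasMinor G (completeBipartiteGraph (Fin n) κ) := by
  let e := T.equivFinOfCardEq hT
  exact hasMinor_completeBipartiteGraph (P := fun j => B (e.symm j))
    (fun j => hconn _ (e.symm j).2) (fun k => (hub k).connected)
    (fun j l hjl => hdisj (e.symm j).2 (e.symm l).2
      fun heq => hjl (e.symm.injective (Subtype.ext heq)))
    hR (fun j k => (hub k).disjoint _ (e.symm j).2) (fun j k => (hub k).exists_adj _ (e.symm j).2)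

lemma injOn_update_id [DecidableEq ι] {s : Set ι} {X Y : ι} (hs : ¬(X ∈ s ∧ Y ∈ s)) :
    Set.InjOn (update id Y X) s := by
  intro Z hZ Z' hZ' heq
  by_cases hZY : Z = Y <;> by_cases hZY' : Z' = Y <;> simp_all

/-- Each vertex `a ∈ A` is attached to the three sets `B i` with `i ∈ N a`, where the `B i` with
`i ∈ C` are pairwise disjoint connected sets avoiding `A`. -/
structure IsTripodSystem (G : SimpleGraph V) (B : ι → Set V) (C : Finset ι) (A : Finset V)
    (N : V → Finset ι) : Prop where
  connected : ∀ i ∈ C, (G.induce (B i)).Connected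
  disjoint : (C : Set ι).PairwiseDisjoint B
  notMem : ∀ a ∈ A, ∀ i ∈ C, a ∉ B i
  subset : ∀ a ∈ A, N a ⊆ C
  card_eq : ∀ a ∈ A, (N a).card = 3
  exists_adj : ∀ a ∈ A, ∀ i ∈ N a, ∃ x ∈ B i, G.Adj x a

namespace IsTripodSystem

variable {C : Finset ι} {A : Finset V} {N : V → Finset ι}

lemma mono (h : IsTripodSystem G B C A N) {A' : Finset V} (hA : A' ⊆ A) :
    IsTripodSystem G B C A' N where
  connected := h.connected
  disjoint := h.disjoint
  notMem a ha := h.notMem a (hA ha)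
  subset a ha := h.subset a (hA ha)
  card_eq a ha := h.card_eq a (hA ha)
  exists_adj a ha := h.exists_adj a (hA ha)

lemma isHub_singleton (h : IsTripodSystem G B C A N) {a : V} (ha : a ∈ A) :
    IsHub G B (N a) {a} where
  connected := connected_induce_singleton G a
  disjoint i hi := Set.disjoint_singleton_right.2 (h.notMem a ha i (h.subset a ha hi))
  exists_adj i hi := by
    obtain ⟨x, hx, hxa⟩ := h.exists_adj a ha i hi
    exact ⟨x, hx, a, rfl, hxa⟩

lemma connected_induce_insert (h : IsTripodSystem G B C A N) {a : V} (ha : a ∈ A) {i : ι}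
    (hi : i ∈ N a) {U : Set V} (hU : (G.induce U).Preconnected) (hiU : B i ⊆ U) :
    (G.induce (insert a U)).Connected := by
  obtain ⟨x, hx, hxa⟩ := h.exists_adj a ha i hi
  rw [Set.insert_eq]
  exact SimpleGraph.connected_induce_union (connected_induce_singleton G a).preconnected hU
    rfl (hiU hx) hxa.symm

lemma isHub_insert_insert [DecidableEq ι] (h : IsTripodSystem G B C A N) {u u' : V} (hu : u ∈ A)
    (hu' : u' ∈ A) {r : ι} (hr : r ∈ N u ∩ N u') (hTC : T ⊆ C) (hrT : r ∉ T)
    (hT : T ⊆ N u ∪ N u') : IsHub G B T (insert u (insert u' (B r))) := by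
  obtain ⟨hru, hru'⟩ := Finset.mem_inter.1 hr
  have hrC := h.subset u hu hru
  refine ⟨?_, fun i hi => ?_, fun i hi => ?_⟩
  · have hconn := h.connected_induce_insert hu' hru' (h.connected r hrC).preconnected subset_rfl
    exact h.connected_induce_insert hu hru hconn.preconnected (Set.subset_insert _ _)
  · rw [Set.disjoint_insert_right, Set.disjoint_insert_right]
    exact ⟨h.notMem u hu i (hTC hi), h.notMem u' hu' i (hTC hi),
      h.disjoint (hTC hi) hrC fun heq => hrT (heq ▸ hi)⟩
  · rcases Finset.mem_union.1 (hT hi) with hiu | hiu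
    · obtain ⟨x, hx, hxu⟩ := h.exists_adj u hu i hiu
      exact ⟨x, hx, u, by simp, hxu⟩
    · obtain ⟨x, hx, hxu⟩ := h.exists_adj u' hu' i hiu
      exact ⟨x, hx, u', by simp, hxu⟩

lemma hasMinor_of_isHub (h : IsTripodSystem G B C A N) {v w : V} (hv : v ∈ A) (hw : w ∈ A)
    (hvw : v ≠ w) (heq : N v = N w) {R : Set V} (hR : IsHub G B (N v) R) (hvR : v ∉ R)
    (hwR : w ∉ R) : HasMinor G (completeBipartiteGraph (Fin 3) (Fin 3)) := by
  refine PlanarMatching.hasMinor_of_isHub (R := ![{v}, {w}, R]) (h.card_eq v hv)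
    (fun i hi => h.connected i (h.subset v hv hi))
    (h.disjoint.subset (Finset.coe_subset.2 (h.subset v hv))) ?_ ?_
  · intro k
    fin_cases k
    exacts [h.isHub_singleton hv, heq ▸ h.isHub_singleton hw, hR]
  · intro k l hkl
    fin_cases k <;> fin_cases l <;> simp_all [Function.onFun, eq_comm]

lemma hasMinor_of_codegree [DecidableEq ι] (h : IsTripodSystem G B C A N) {X : ι}
    (hne : {a ∈ A | X ∈ N a}.Nonempty) (hX : {a ∈ A | X ∈ N a}.card ≤ 5)
    (hcodeg : ∀ a ∈ A, X ∈ N a → ∀ Y ∈ N a, Y ≠ X → 3 ≤ {b ∈ A | X ∈ N b ∧ Y ∈ N b}.card) :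
    HasMinor G (completeBipartiteGraph (Fin 3) (Fin 3)) := by
  have mem {a : V} (ha : a ∈ {a ∈ A | X ∈ N a}) : a ∈ A ∧ X ∈ N a := Finset.mem_filter.1 ha
  have eq_insert {a : V} (ha : a ∈ {a ∈ A | X ∈ N a}) : N a = insert X ((N a).erase X) :=
    (Finset.insert_erase (mem ha).2).symm
  obtain ⟨v, hv, w, hw, hvw, heq, hub⟩ := exists_parallel_or_triangle
    (D := {a ∈ A | X ∈ N a}) (M := fun a => (N a).erase X)
    (fun a ha => by rw [Finset.card_erase_of_mem (mem ha).2, h.card_eq a (mem ha).1])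
    (fun a ha Y hY => by
      obtain ⟨hYX, hYa⟩ := Finset.mem_erase.1 hY
      simpa [Finset.filter_filter, hYX] using hcodeg a (mem ha).1 (mem ha).2 Y hYa hYX) hne hX
  have hN : N v = N w := by rw [eq_insert hv, eq_insert hw, heq]
  rcases hub with ⟨u, hu, huv, huw, hueq⟩ | ⟨u, hu, u', hu', r, hr, hrv, hsub⟩
  · have hNu : N u = N v := by rw [eq_insert hu, eq_insert hv, hueq]
    exact h.hasMinor_of_isHub (mem hv).1 (mem hw).1 hvw hN (hNu ▸ h.isHub_singleton (mem hu).1)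
      huv.symm huw.symm
  · simp only [Finset.mem_inter, Finset.mem_erase] at hr
    have hrv' : r ∉ N v := fun hmem => hrv (Finset.mem_erase.2 ⟨hr.1.1, hmem⟩)
    have hrC : r ∈ C := h.subset u (mem hu).1 hr.1.2
    have hNsub : N v ⊆ N u ∪ N u' := by
      rw [eq_insert hv, Finset.insert_subset_iff]
      exact ⟨Finset.mem_union_left _ (mem hu).2, hsub.trans
        (Finset.union_subset_union (Finset.erase_subset _ _) (Finset.erase_subset _ _))⟩
    have notMem_hub {x : V} (hx : x ∈ A) (hxv : N v = N x) : x ∉ insert u (insert u' (B r)) := by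
      rintro (rfl | rfl | hxr)
      exacts [hrv' (hxv ▸ hr.1.2), hrv' (hxv ▸ hr.2.2), h.notMem x hx r hrC hxr]
    exact h.hasMinor_of_isHub (mem hv).1 (mem hw).1 hvw hN
      (h.isHub_insert_insert (mem hu).1 (mem hu').1 (Finset.mem_inter.2 ⟨hr.1.2, hr.2.2⟩)
        (h.subset v (mem hv).1) hrv' hNsub)
      (notMem_hub (mem hv).1 rfl) (notMem_hub (mem hw).1 hN)

lemma connected_merge (h : IsTripodSystem G B C A N) {a : V} (ha : a ∈ A) {X Y : ι}
    (hX : X ∈ N a) (hY : Y ∈ N a) : (G.induce (insert a (B X) ∪ B Y)).Connected := by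
  obtain ⟨y, hy, hya⟩ := h.exists_adj a ha Y hY
  have hBX := (h.connected X (h.subset a ha hX)).preconnected
  exact SimpleGraph.connected_induce_union
    (h.connected_induce_insert ha hX hBX subset_rfl).preconnected
    (h.connected Y (h.subset a ha hY)).preconnected (Set.mem_insert _ _) hy hya.symm

lemma disjoint_merge (h : IsTripodSystem G B C A N) {a : V} (ha : a ∈ A) {X Y : ι}
    (hX : X ∈ N a) (hY : Y ∈ N a) {j : ι} (hj : j ∈ C) (hjX : j ≠ X) (hjY : j ≠ Y) :
    Disjoint (insert a (B X) ∪ B Y) (B j) := by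
  rw [Set.disjoint_union_left, Set.disjoint_insert_left]
  exact ⟨⟨h.notMem a ha j hj, h.disjoint (h.subset a ha hX) hj hjX.symm⟩,
    h.disjoint (h.subset a ha hY) hj hjY.symm⟩

lemma merge [DecidableEq ι] (h : IsTripodSystem G B C A N) {a : V} (ha : a ∈ A) {X Y : ι}
    (hX : X ∈ N a) (hY : Y ∈ N a) (hYX : Y ≠ X) :
    IsTripodSystem G (update B X (insert a (B X) ∪ B Y)) (C.erase Y)
      {b ∈ A | ¬(X ∈ N b ∧ Y ∈ N b)} (fun b => (N b).image (update id Y X)) := by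
  refine ⟨fun i hi => ?_, fun i hi j hj hij => ?_, fun b hb i hi => ?_, fun b hb => ?_,
    fun b hb => ?_, fun b hb i hi => ?_⟩
  · rcases eq_or_ne i X with rfl | hiX
    · rw [update_self]
      exact h.connected_merge ha hX hY
    · rw [update_of_ne hiX]
      exact h.connected i (Finset.mem_of_mem_erase hi)
  · obtain ⟨hiY, hiC⟩ := Finset.mem_erase.1 hi
    obtain ⟨hjY, hjC⟩ := Finset.mem_erase.1 hj
    rcases eq_or_ne i X with rfl | hiX
    · simpa [onFun, hij.symm] using h.disjoint_merge ha hX hY hjC hij.symm hjY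
    rcases eq_or_ne j X with rfl | hjX
    · simpa [onFun, hiX] using (h.disjoint_merge ha hX hY hiC hiX hiY).symm
    · simpa [onFun, hiX, hjX] using h.disjoint hiC hjC hij
  · obtain ⟨hbA, hb⟩ := Finset.mem_filter.1 hb
    rcases eq_or_ne i X with rfl | hiX
    · have hba : b ≠ a := fun heq => hb (heq ▸ ⟨hX, hY⟩)
      simpa [hba] using ⟨h.notMem b hbA i (h.subset a ha hX), h.notMem b hbA Y (h.subset a ha hY)⟩
    · simpa [hiX] using h.notMem b hbA i (Finset.mem_of_mem_erase hi)
  · refine Finset.image_subset_iff.2 fun Z hZ => ?_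
    have hZC := h.subset b (Finset.mem_filter.1 hb).1 hZ
    rcases eq_or_ne Z Y with rfl | hZY
    · simpa [hYX.symm] using h.subset a ha hX
    · simpa [hZY] using hZC
  · obtain ⟨hbA, hb⟩ := Finset.mem_filter.1 hb
    rw [Finset.card_image_of_injOn (injOn_update_id hb), h.card_eq b hbA]
  · obtain ⟨Z, hZ, rfl⟩ := Finset.mem_image.1 hi
    obtain ⟨x, hx, hxb⟩ := h.exists_adj b (Finset.mem_filter.1 hb).1 Z hZ
    refine ⟨x, ?_, hxb⟩
    rcases eq_or_ne Z Y with rfl | hZY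
    · simp [hx]
    rcases eq_or_ne Z X with rfl | hZX
    · simp [hZY, hx]
    · simp [hZY, hZX, hx]

lemma erase [DecidableEq ι] (h : IsTripodSystem G B C A N) {X : ι} (hX : ∀ a ∈ A, X ∉ N a) :
    IsTripodSystem G B (C.erase X) A N where
  connected i hi := h.connected i (Finset.mem_of_mem_erase hi)
  disjoint := h.disjoint.subset (Finset.coe_subset.2 (Finset.erase_subset X C))
  notMem a ha i hi := h.notMem a ha i (Finset.mem_of_mem_erase hi)
  subset a ha := Finset.subset_erase.2 ⟨h.subset a ha, hX a ha⟩
  card_eq := h.card_eq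
  exists_adj := h.exists_adj

lemma exists_card_filter_le_five [DecidableEq ι] (h : IsTripodSystem G B C A N)
    (hA : A.card < 2 * C.card) : ∃ X ∈ C, {a ∈ A | X ∈ N a}.card ≤ 5 := by
  by_contra! hdeg
  have count : C.card * 6 ≤ A.card * 3 :=
    Finset.card_mul_le_card_mul (fun X a => X ∈ N a) (fun X hX => hdeg X hX) fun a ha => by
      rw [← h.card_eq a ha]
      exact Finset.card_le_card fun X hX => (Finset.mem_filter.1 hX).2
  omega

lemma three_le_codegree [DecidableEq ι] (h : IsTripodSystem G B C A N)
    (hA : A.card + 1 = 2 * C.card)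
    (ih : ∀ {B' : ι → Set V} {C' : Finset ι} {A' : Finset V} {N' : V → Finset ι},
      IsTripodSystem G B' C' A' N' → C'.Nonempty → C'.card < C.card →
        A'.card + 2 ≤ 2 * C'.card)
    {a : V} (ha : a ∈ A) {X Y : ι} (hX : X ∈ N a) (hY : Y ∈ N a) (hYX : Y ≠ X) :
    3 ≤ {b ∈ A | X ∈ N b ∧ Y ∈ N b}.card := by
  have hYC := h.subset a ha hY
  have hmerge := ih (h.merge ha hX hY hYX)
    ⟨X, Finset.mem_erase.2 ⟨hYX.symm, h.subset a ha hX⟩⟩ (Finset.card_erase_lt_of_mem hYC)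
  rw [Finset.card_erase_of_mem hYC] at hmerge
  have := Finset.card_filter_add_card_filter_not (s := A) fun b => X ∈ N b ∧ Y ∈ N b
  omega

-- In a minimal counterexample, merging two sets costs at least three vertices, whereas double
-- counting provides a set to which at most five vertices are attached.
theorem card_add_two_le (hG : ¬HasMinor G (completeBipartiteGraph (Fin 3) (Fin 3)))
    (h : IsTripodSystem G B C A N) (hC : C.Nonempty) : A.card + 2 ≤ 2 * C.card := by
  classical
  induction hn : C.card using Nat.strong_induction_on generalizing B C A N with
  | _ n ih =>
  subst hn
  by_contra! hlarge
  have hpos := hC.card_pos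
  obtain ⟨A₀, hsub, hcard⟩ := Finset.exists_subset_card_eq (s := A) (n := 2 * C.card - 1)
    (by omega)
  replace h := h.mono hsub
  obtain ⟨X, hX, hfive⟩ := h.exists_card_filter_le_five (by omega)
  rcases Finset.eq_empty_or_nonempty {a ∈ A₀ | X ∈ N a} with hempty | hne
  · have hunused : ∀ a ∈ A₀, X ∉ N a := Finset.filter_eq_empty_iff.1 hempty
    obtain ⟨a, ha⟩ : A₀.Nonempty := Finset.card_pos.1 (by omega)
    obtain ⟨Y, hY⟩ : (N a).Nonempty := Finset.card_pos.1 (by simp [h.card_eq a ha])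
    have hYC : Y ∈ C.erase X := (h.erase hunused).subset a ha hY
    have := ih _ (Finset.card_erase_lt_of_mem hX) (h.erase hunused) ⟨Y, hYC⟩ rfl
    rw [Finset.card_erase_of_mem hX] at this
    omega
  · refine hG (h.hasMinor_of_codegree hne hfive fun a ha hXa Y hY hYX => ?_)
    exact h.three_le_codegree (by omega) (fun h' hne' hlt => ih _ hlt h' hne' rfl) ha hXa hY hYX

end IsTripodSystem

theorem card_le_two_mul_card_of_three_le [DecidableRel G.Adj] {S A : Finset V}
    (hG : ¬HasMinor G (completeBipartiteGraph (Fin 3) (Fin 3))) (hSA : Disjoint S A)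
    (hA : ∀ a ∈ A, 3 ≤ {x ∈ S | G.Adj x a}.card) : A.card ≤ 2 * S.card := by
  rcases A.eq_empty_or_nonempty with rfl | ⟨a₀, ha₀⟩
  · simp
  have hchoose (a : V) : ∃ N : Finset V, a ∈ A → N ⊆ {x ∈ S | G.Adj x a} ∧ N.card = 3 := by
    by_cases ha : a ∈ A
    · obtain ⟨N, hN⟩ := Finset.exists_subset_card_eq (hA a ha)
      exact ⟨N, fun _ => hN⟩
    · exact ⟨∅, fun h => absurd h ha⟩
  choose N hN using hchoose
  have hS : S.Nonempty := (Finset.card_pos.1 (three_pos.trans_le (hA a₀ ha₀))).mono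
    (Finset.filter_subset _ _)
  have tripods : IsTripodSystem G (fun v => {v}) S A N := by
    refine ⟨fun v _ => connected_induce_singleton G v, fun _ _ _ _ => Set.disjoint_singleton.2,
      fun a ha x hx => ?_, fun a ha => (hN a ha).1.trans (Finset.filter_subset _ _),
      fun a ha => (hN a ha).2, fun a ha x hx => ?_⟩
    · rintro rfl
      exact Finset.disjoint_left.1 hSA hx ha
    · exact ⟨x, rfl, (Finset.mem_filter.1 ((hN a ha).1 hx)).2⟩
  exact (Nat.le_add_right _ 2).trans (tripods.card_add_two_le hG hS)

end Tripod

section OddComponents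

variable {V W : Type*}

lemma three_le_ncard_supp {G : SimpleGraph V} {c : G.ConnectedComponent}
    (hodd : Odd c.supp.ncard) (hc : ∀ v ∈ c.supp, ¬G.IsIsolated v) : 3 ≤ c.supp.ncard := by
  suffices hone : c.supp.ncard ≠ 1 by
    obtain ⟨k, hk⟩ := hodd
    omega
  intro hone
  obtain ⟨v, hv⟩ := Set.ncard_eq_one.1 hone
  have hvc : v ∈ c.supp := hv ▸ rfl
  obtain ⟨w, hvw⟩ := SimpleGraph.exists_adj_iff_not_isIsolated.2 (hc v hvc)
  have hwc : w ∈ c.supp := c.mem_supp_of_adj_mem_supp hvc hvw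
  rw [hv] at hwc
  exact hvw.ne hwc.symm

-- Give isolated vertices weight `3` and all others weight `1`: every odd component weighs `≥ 3`.
theorem three_mul_ncard_oddComponents_le [Finite V] (G : SimpleGraph V) :
    3 * G.oddComponents.ncard ≤ Nat.card V + 2 * {v | G.IsIsolated v}.ncard := by
  classical
  have := Fintype.ofFinite V
  let weight (v : V) : ℕ := 1 + 2 * if G.IsIsolated v then 1 else 0
  have three_le (c : G.ConnectedComponent) (hodd : Odd c.supp.ncard) :
      3 ≤ ∑ v with G.connectedComponentMk v = c, weight v := by
    by_cases hc : ∀ v ∈ c.supp, ¬G.IsIsolated v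
    · calc 3 ≤ c.supp.ncard := three_le_ncard_supp hodd hc
        _ = ∑ v with G.connectedComponentMk v = c, 1 := by
          rw [← Finset.card_eq_sum_ones, ← Set.ncard_coe_finset]
          congr
          ext v
          simp
        _ ≤ _ := Finset.sum_le_sum fun v _ => Nat.le_add_right _ _
    · push Not at hc
      obtain ⟨v, hvc, hv⟩ := hc
      calc 3 = weight v := by simp [weight, hv]
        _ ≤ _ := Finset.single_le_sum (f := weight) (fun _ _ => Nat.zero_le _) (by simpa using hvc)
  calc 3 * G.oddComponents.ncard
      = ∑ c : G.ConnectedComponent with Odd c.supp.ncard, 3 := by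
        rw [Finset.sum_const, smul_eq_mul, mul_comm, ← Set.ncard_coe_finset]
        simp
    _ ≤ ∑ c with Odd c.supp.ncard, ∑ v with G.connectedComponentMk v = c, weight v :=
        Finset.sum_le_sum fun c hc => three_le c (Finset.mem_filter.1 hc).2
    _ ≤ ∑ c, ∑ v with G.connectedComponentMk v = c, weight v :=
        Finset.sum_le_sum_of_subset (Finset.filter_subset _ _)
    _ = ∑ v, weight v := Finset.sum_fiberwise _ _ _
    _ = Nat.card V + 2 * {v | G.IsIsolated v}.ncard := by
        rw [Finset.sum_add_distrib, ← Finset.mul_sum, ← Finset.card_filter, ← Set.ncard_coe_finset]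
        simp

lemma ncard_oddComponents_congr {G : SimpleGraph V} {H : SimpleGraph W} (φ : G ≃g H) :
    G.oddComponents.ncard = H.oddComponents.ncard := by
  refine Nat.card_congr (φ.connectedComponentEquiv.subtypeEquiv fun c => ?_)
  change Odd c.supp.ncard ↔ Odd (φ.connectedComponentEquiv c).supp.ncard
  rw [← Nat.card_coe_set_eq, Nat.card_congr (SimpleGraph.ConnectedComponent.isoEquivSupp φ c),
    Nat.card_coe_set_eq]

end OddComponents

section TutteBerge

variable {V κ : Type*} {G : SimpleGraph V}

/-- The graph `G` with the elements of `κ` added as vertices adjacent to all others. -/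
def addUniversal (G : SimpleGraph V) (κ : Type*) : SimpleGraph (V ⊕ κ) :=
  (Gᶜ ⊕g ⊥)ᶜ

lemma addUniversal_adj_inl {a b : V} :
    (addUniversal G κ).Adj (.inl a) (.inl b) ↔ G.Adj a b := by
  simp only [addUniversal, SimpleGraph.compl_adj, SimpleGraph.sum_adj_inl, ne_eq, Sum.inl.injEq,
    not_and, not_not]
  exact ⟨fun h => h.2 h.1, fun h => ⟨h.ne, fun _ => h⟩⟩

lemma addUniversal_adj_inr {x : V ⊕ κ} {k : κ} (hx : x ≠ .inr k) :
    (addUniversal G κ).Adj x (.inr k) := by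
  rcases x with a | l <;> simp_all [addUniversal]

lemma ncard_verts_le_of_isMatching [Finite V] {M : G.Subgraph} (hM : M.IsMatching) :
    M.verts.ncard ≤ 2 * M.edgeSet.ncard := by
  classical
  have := Fintype.ofFinite V
  have hcover : M.verts.toFinset ⊆ M.edgeSet.toFinset.biUnion fun e => e.toFinset := by
    intro v hv
    simpa [hM.verts_eq_biUnion_edgeSet] using hv
  rw [Set.ncard_eq_toFinset_card', Set.ncard_eq_toFinset_card', mul_comm]
  refine (Finset.card_le_card hcover).trans (Finset.card_biUnion_le_card_mul _ _ _ fun e _ => ?_)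
  rw [Sym2.card_toFinset]
  split_ifs <;> simp

/-- The edges of `M` that lie in `G`. -/
def innerSubgraph (M : (addUniversal G κ).Subgraph) : G.Subgraph where
  verts := {a | ∃ b, M.Adj (.inl a) (.inl b)}
  Adj a b := M.Adj (.inl a) (.inl b)
  adj_sub h := addUniversal_adj_inl.1 (M.adj_sub h)
  edge_vert h := ⟨_, h⟩
  symm := ⟨fun _ _ h => h.symm⟩

lemma isMatching_innerSubgraph {M : (addUniversal G κ).Subgraph} (hM : M.IsMatching) :
    (innerSubgraph M).IsMatching := by
  rintro a ⟨b, hab⟩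
  exact ⟨b, hab, fun c hac => Sum.inl_injective (hM.eq_of_adj_left hac hab)⟩

lemma card_le_two_mul_ncard_edgeSet_add [Finite V] [Finite κ] {M : (addUniversal G κ).Subgraph}
    (hM : M.IsPerfectMatching) :
    Nat.card V ≤ 2 * (innerSubgraph M).edgeSet.ncard + Nat.card κ := by
  have huncovered : (innerSubgraph M).vertsᶜ.ncard ≤ Nat.card κ := by
    have hpartner (a : ↥(innerSubgraph M).vertsᶜ) : ∃ k, M.Adj (.inl ↑a) (.inr k) := by
      obtain ⟨b | k, hb, -⟩ := hM.1 (hM.2 (.inl ↑a))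
      exacts [absurd ⟨b, hb⟩ a.2, ⟨k, hb⟩]
    choose partner hpartner using hpartner
    refine Nat.card_le_card_of_injective partner fun a b hab => Subtype.ext ?_
    exact Sum.inl_injective (hM.1.eq_of_adj_right (hpartner a) (hab ▸ hpartner b))
  rw [← Set.ncard_add_ncard_compl (innerSubgraph M).verts]
  exact add_le_add (ncard_verts_le_of_isMatching (isMatching_innerSubgraph hM.1)) huncovered

lemma ncard_oddComponents_addUniversal {U : Set (V ⊕ κ)} (hU : Set.range Sum.inr ⊆ U) :
    ((⊤ : (addUniversal G κ).Subgraph).deleteVerts U).coe.oddComponents.ncard =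
      (G.induce (Sum.inl ⁻¹' U)ᶜ).oddComponents.ncard := by
  let f (a : ↥(Sum.inl ⁻¹' U)ᶜ) : ((⊤ : (addUniversal G κ).Subgraph).deleteVerts U).verts :=
    ⟨.inl ↑a, trivial, a.2⟩
  have hf : Function.Bijective f := by
    refine ⟨fun a b hab => Subtype.ext (Sum.inl_injective (congrArg Subtype.val hab)), ?_⟩
    rintro ⟨a | k, hx⟩
    · exact ⟨⟨a, hx.2⟩, rfl⟩
    · exact absurd (hU ⟨k, rfl⟩) hx.2
  refine (ncard_oddComponents_congr ⟨Equiv.ofBijective f hf, fun {a b} => ?_⟩).symm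
  have ha : Sum.inl ↑a ∉ U := a.2
  have hb : Sum.inl ↑b ∉ U := b.2
  simp [f, addUniversal_adj_inl, ha, hb]

lemma ncard_oddComponents_addUniversal_le_one {U : Set (V ⊕ κ)} {k : κ} (hk : .inr k ∉ U) :
    ((⊤ : (addUniversal G κ).Subgraph).deleteVerts U).coe.oddComponents.ncard ≤ 1 := by
  let apex : ((⊤ : (addUniversal G κ).Subgraph).deleteVerts U).verts := ⟨.inr k, trivial, hk⟩
  have reachable_apex (x) :
      ((⊤ : (addUniversal G κ).Subgraph).deleteVerts U).coe.Reachable x apex := by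
    rcases eq_or_ne x apex with rfl | hx
    · rfl
    · have hadj := addUniversal_adj_inr (G := G) fun heq => hx (Subtype.ext heq)
      exact SimpleGraph.Adj.reachable (by simpa [apex, hk] using ⟨x.2.2, hadj⟩)
  have := SimpleGraph.Preconnected.subsingleton_connectedComponent
    fun x y => (reachable_apex x).trans (reachable_apex y).symm
  exact Set.ncard_le_one_of_subsingleton _

lemma exists_isPerfectMatching_addUniversal [Finite V] [Finite κ]
    (heven : Even (Nat.card V + Nat.card κ))
    (hodd : ∀ S : Set V, (G.induce Sᶜ).oddComponents.ncard ≤ S.ncard + Nat.card κ) :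
    ∃ M : (addUniversal G κ).Subgraph, M.IsPerfectMatching := by
  rw [SimpleGraph.tutte]
  intro U hU
  rw [SimpleGraph.IsTutteViolator] at hU
  by_cases hall : Set.range Sum.inr ⊆ U
  · have hcard : U.ncard = (Sum.inl ⁻¹' U).ncard + Nat.card κ := by
      have hinr : Nat.card {k // Sum.inr k ∈ U} = Nat.card κ :=
        Nat.card_congr (Equiv.subtypeUnivEquiv fun k => hall ⟨k, rfl⟩)
      rw [← hinr, ← Nat.card_coe_set_eq, ← Nat.card_coe_set_eq, ← Nat.card_sum]
      exact Nat.card_congr Equiv.subtypeSum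
    rw [ncard_oddComponents_addUniversal hall] at hU
    exact absurd (hodd (Sum.inl ⁻¹' U)) (by omega)
  · obtain ⟨_, ⟨k, rfl⟩, hk⟩ := Set.not_subset.1 hall
    have hle := ncard_oddComponents_addUniversal_le_one (G := G) hk
    obtain rfl : U = ∅ := (Set.ncard_eq_zero).1 (by omega)
    have hparity := SimpleGraph.odd_ncard_oddComponents
      ((⊤ : (addUniversal G κ).Subgraph).deleteVerts ∅).coe
    have hcard : Nat.card ((⊤ : (addUniversal G κ).Subgraph).deleteVerts ∅).verts =
        Nat.card V + Nat.card κ := by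
      simp [Nat.card_sum]
    rw [hcard, ← Nat.not_even_iff_odd (n := Nat.card V + _)] at hparity
    exact hparity.1 (Nat.odd_iff.2 (by omega)) heven

theorem tutte_berge [Finite V] (G : SimpleGraph V) :
    ∃ (M : G.Subgraph) (S : Set V), M.IsMatching ∧
      Nat.card V + S.ncard ≤ 2 * M.edgeSet.ncard + (G.induce Sᶜ).oddComponents.ncard := by
  let deficiency (S : Set V) : ℤ := (G.induce Sᶜ).oddComponents.ncard - S.ncard
  obtain ⟨S, hS⟩ := Finite.exists_max deficiency
  have hnonneg : 0 ≤ deficiency S := (hS ∅).trans' (by simp [deficiency])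
  simp only [deficiency] at hS hnonneg
  obtain ⟨d, hd⟩ := Int.eq_ofNat_of_zero_le hnonneg
  have heven : Even (Nat.card V + Nat.card (Fin d)) := by
    have hparity := SimpleGraph.odd_ncard_oddComponents (G.induce Sᶜ)
    have hcard := Set.ncard_add_ncard_compl S
    rw [Nat.card_coe_set_eq, Nat.odd_iff, Nat.odd_iff] at hparity
    rw [Nat.card_fin, Nat.even_iff]
    omega
  obtain ⟨M, hM⟩ := exists_isPerfectMatching_addUniversal (G := G) (κ := Fin d) heven fun T => by
    have := hS T
    rw [Nat.card_fin]
    omega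
  have := card_le_two_mul_ncard_edgeSet_add hM
  rw [Nat.card_fin] at this
  exact ⟨innerSubgraph M, S, isMatching_innerSubgraph hM.1, by omega⟩

end TutteBerge

section Matching

variable {V : Type*} [Fintype V] {G : SimpleGraph V} [DecidableRel G.Adj]

lemma neighborFinset_subset_of_isIsolated_induce_compl {S : Finset V} {v : ↥((S : Set V)ᶜ)}
    (hv : (G.induce (S : Set V)ᶜ).IsIsolated v) : G.neighborFinset v ⊆ S := by
  intro w hw
  by_contra hwS
  exact hv ⟨w, hwS⟩ ((G.mem_neighborFinset v w).1 hw)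

lemma ncard_isIsolated_induce_compl_le (hG : ¬HasMinor G (completeBipartiteGraph (Fin 3) (Fin 3)))
    (S : Set V) :
    {v | (G.induce Sᶜ).IsIsolated v}.ncard ≤ 2 * S.ncard + {v | ¬3 ≤ G.degree v}.ncard := by
  classical
  lift S to Finset V using S.toFinite
  let A : Finset V := {v | 3 ≤ G.degree v ∧ ∃ h : v ∈ (S : Set V)ᶜ, (G.induce _).IsIsolated ⟨v, h⟩}
  have hA : A.card ≤ 2 * S.card := by
    refine card_le_two_mul_card_of_three_le hG (Finset.disjoint_right.2 fun a ha => ?_)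
      fun a ha => ?_
    · exact (Finset.mem_filter.1 ha).2.2.1
    · obtain ⟨hdeg, haS, hisol⟩ := (Finset.mem_filter.1 ha).2
      refine (G.card_neighborFinset_eq_degree a ▸ hdeg).trans (Finset.card_le_card fun x hx => ?_)
      exact Finset.mem_filter.2 ⟨neighborFinset_subset_of_isIsolated_induce_compl hisol hx,
        ((G.mem_neighborFinset a x).1 hx).symm⟩
  have hcover : Subtype.val '' {v | (G.induce (S : Set V)ᶜ).IsIsolated v} ⊆
      ↑A ∪ {v | ¬3 ≤ G.degree v} := by
    rintro _ ⟨v, hv, rfl⟩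
    by_cases hdeg : 3 ≤ G.degree v
    · exact .inl (Finset.mem_coe.2 (Finset.mem_filter.2 ⟨Finset.mem_univ _, hdeg, v.2, hv⟩))
    · exact .inr hdeg
  calc {v | (G.induce (S : Set V)ᶜ).IsIsolated v}.ncard
      = (Subtype.val '' {v | (G.induce (S : Set V)ᶜ).IsIsolated v}).ncard :=
        (Set.ncard_image_of_injective _ Subtype.val_injective).symm
    _ ≤ (↑A ∪ {v | ¬3 ≤ G.degree v}).ncard := Set.ncard_le_ncard hcover
    _ ≤ A.card + {v | ¬3 ≤ G.degree v}.ncard := by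
        rw [← Set.ncard_coe_finset]
        exact Set.ncard_union_le _ _
    _ ≤ _ := by
        rw [Set.ncard_coe_finset]
        gcongr

end Matching

end PlanarMatching

open PlanarMatching in
theorem planar_min_degree_three_matching_general {V : Type*} [Fintype V] (G : SimpleGraph V)
    [DecidableRel G.Adj] (hG : ¬HasMinor G (completeBipartiteGraph (Fin 3) (Fin 3))) :
    ∃ M : G.Subgraph, M.IsMatching ∧ {v | 3 ≤ G.degree v}.ncard ≤ 3 * M.edgeSet.ncard := by
  obtain ⟨M, S, hM, hberge⟩ := tutte_berge G
  refine ⟨M, hM, ?_⟩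
  have hodd := three_mul_ncard_oddComponents_le (G.induce Sᶜ)
  have hisolated := ncard_isIsolated_induce_compl_le hG S
  have hS := Set.ncard_add_ncard_compl S
  have hdegree : {v | 3 ≤ G.degree v}.ncard + {v | ¬3 ≤ G.degree v}.ncard = Nat.card V :=
    Set.ncard_add_ncard_compl _
  rw [Nat.card_coe_set_eq] at hodd
  omega

/-- Every planar graph on `n` vertices with minimum degree at least 3 has a
matching of size at least `n/3`. -/
theorem planar_min_degree_three_matching {V : Type*} [Fintype V]
    (G : SimpleGraph V) [DecidableRel G.Adj] (hplanar : G.IsPlanar)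
    (hdeg : ∀ v : V, 3 ≤ G.degree v) :
    ∃ M : G.Subgraph, M.IsMatching ∧ Fintype.card V ≤ 3 * M.edgeSet.ncard := by
  simpa [hdeg] using planar_min_degree_three_matching_general G
    (PlanarMatching.not_hasMinor_completeBipartiteGraph_of_isPlanar hplanar)
end
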